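/- There exists a constant ε₀ = ε₀(n, λ, V₀) > 0 such that if the smallness condition holds with parameter ε₀, then there is a constant C = C(n, λ, Λ, V₀) such that for every ancient solution u of ∂ₜu = Lu on ℝ⁻ × Ω vanishing on ℝ⁻ × ∂Ω and every 0 < r < R, one has ∫_{Q_r} u² ≤ (C/(R−r)²) ∫_{Q_R ∖ Q_r} u². -/

import Mathlib

/-!
The estimate is the Caccioppoli inequality for the parabolic equation combined with the Poincaré
inequality on the strip. Testing `∂ₜu = Lu` with `τ ζ² u`, where `τ` cuts off in time and `ζ` in
the `x₀` direction, bounds `∫∫ τ ζ² |∇u|²` by `∫∫ (ζ'² + |τ'|) u²`, up to terms of size `ε ∫∫ τ ζ² u²`.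
A function vanishing outside the strip satisfies `∫ ζ² u² ≤ P ∫ ζ² |∇u|²` with `P = P(n, V₀)`, so for
`ε₀` small the lower order terms are absorbed. What remains is
`κ ∫∫ τ ζ² u² ≤ ∫∫ (C₁ τ ζ'² + |τ'| ζ²) u²`, whose right side lives on `Q_R ∖ Q_r`.

The regularity in hand requires care at three places.

* The solution is only continuous up to `∂Ω`, with no control of its gradient there. The test
  function is replaced by `ζ² g_δ(u)` where `g_δ` vanishes near zero and tends to the identity as
  `δ → 0`; it is then `C¹` on the whole space with support compact in the strip (`contDiff_trunc`).
  The gradient term becomes that of `ψ_δ(u)` with `ψ_δ'² = g_δ'`.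
* The time derivative is not assumed to be jointly continuous or locally bounded, so
  differentiation under the integral needs a domination. A barrier argument with the maximum
  principle gives `|u(t) - u(t₀)| ≤ M (t - t₀)` for `t ≥ t₀`, locally uniformly in the strip
  (`forward_bound`). Hence the truncated energy has a right derivative (`energy_hasDerivWithinAt`),
  and a continuous function with controlled right derivative can be integrated.
* The Poincaré constant depends only on the volume of `Ω₀`. If `f` vanishes off the strip, then at
  each point the translates of `f` by vectors in a cube of volume larger than `V₀` vanish for a fixed
  proportion of the vectors; averaging the translation estimate over the cube bounds `f` by its
  gradient (`poincare_lintegral`). Translating only in the `Ω₀` directions leaves the weight `ζ²`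
  untouched.
-/

open MeasureTheory Set Filter

noncomputable section

/-- Partial derivative of `f` in the `i`-th coordinate direction. -/
def pd {n : ℕ} (i : Fin (n + 1)) (f : (Fin (n + 1) → ℝ) → ℝ) (x : Fin (n + 1) → ℝ) : ℝ :=
  fderiv ℝ f x (Pi.single i 1)

/-- The divergence-form operator `L u = ∂ᵢ(aᶦʲ ∂ⱼ u) + bⁱ ∂ᵢ u + c u`. -/
def Lop {n : ℕ} (a : (Fin (n + 1) → ℝ) → Fin (n + 1) → Fin (n + 1) → ℝ)
    (b : (Fin (n + 1) → ℝ) → Fin (n + 1) → ℝ) (c : (Fin (n + 1) → ℝ) → ℝ)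
    (f : (Fin (n + 1) → ℝ) → ℝ) (x : Fin (n + 1) → ℝ) : ℝ :=
  (∑ i, pd i (fun y => ∑ j, a y i j * pd j f y) x) + (∑ i, b x i * pd i f x) + c x * f x

/-- The infinite strip `Ω = ℝ × Ω₀ ⊆ ℝ^{n+1}` (first coordinate `x₀` unconstrained). -/
def strip {n : ℕ} (Ω₀ : Set (Fin n → ℝ)) : Set (Fin (n + 1) → ℝ) :=
  {x | (fun i : Fin n => x i.succ) ∈ Ω₀}

/-- `D_r = (-r, r) × Ω₀`. -/
def Dset {n : ℕ} (Ω₀ : Set (Fin n → ℝ)) (r : ℝ) : Set (Fin (n + 1) → ℝ) :=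
  {x | x 0 ∈ Ioo (-r) r ∧ (fun i : Fin n => x i.succ) ∈ Ω₀}

/-- `Q_r = (-r², 0] × D_r`. -/
def Qset {n : ℕ} (Ω₀ : Set (Fin n → ℝ)) (r : ℝ) : Set (ℝ × (Fin (n + 1) → ℝ)) :=
  Ioc (-r ^ 2) 0 ×ˢ Dset Ω₀ r

/-- Ellipticity, boundedness and regularity of the coefficients of `L`. -/
structure GoodCoeffs {n : ℕ} (Ω₀ : Set (Fin n → ℝ)) (lam Lam : ℝ)
    (a : (Fin (n + 1) → ℝ) → Fin (n + 1) → Fin (n + 1) → ℝ)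
    (b : (Fin (n + 1) → ℝ) → Fin (n + 1) → ℝ) (c : (Fin (n + 1) → ℝ) → ℝ) : Prop where
  elliptic : ∀ x ∈ strip Ω₀, ∀ ξ : Fin (n + 1) → ℝ,
    lam * ∑ i, ξ i ^ 2 ≤ ∑ i, ∑ j, a x i j * ξ i * ξ j
  a_bdd : ∀ x ∈ strip Ω₀, ∀ i j, |a x i j| ≤ Lam
  a_reg : ∀ i j, ContDiffOn ℝ 1 (fun x => a x i j) (strip Ω₀)
  b_bdd : ∃ M, ∀ x ∈ strip Ω₀, ∀ i, |b x i| ≤ M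
  c_bdd : ∃ M, ∀ x ∈ strip Ω₀, |c x| ≤ M

/-- The smallness condition with parameter `ε`: `|bⁱ| ≤ √ε` and `c ≤ ε` on `Ω`. -/
def Smallness {n : ℕ} (Ω₀ : Set (Fin n → ℝ))
    (b : (Fin (n + 1) → ℝ) → Fin (n + 1) → ℝ) (c : (Fin (n + 1) → ℝ) → ℝ) (ε : ℝ) : Prop :=
  ∀ x ∈ strip Ω₀, (∀ i, |b x i| ≤ Real.sqrt ε) ∧ c x ≤ ε

/-- Ancient solution of `∂ₜ u = L u` on `ℝ⁻ × Ω` vanishing on `ℝ⁻ × ∂Ω`: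
continuous up to the boundary, `C²` in space, differentiable in time, solving the equation. -/
structure IsAncientSolution {n : ℕ} (Ω₀ : Set (Fin n → ℝ))
    (a : (Fin (n + 1) → ℝ) → Fin (n + 1) → Fin (n + 1) → ℝ)
    (b : (Fin (n + 1) → ℝ) → Fin (n + 1) → ℝ) (c : (Fin (n + 1) → ℝ) → ℝ)
    (u : ℝ → (Fin (n + 1) → ℝ) → ℝ) : Prop where
  cont : ContinuousOn (fun p : ℝ × (Fin (n + 1) → ℝ) => u p.1 p.2)
    (Iic (0 : ℝ) ×ˢ closure (strip Ω₀))
  space_reg : ∀ t ≤ (0 : ℝ), ContDiffOn ℝ 2 (u t) (strip Ω₀)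
  pde : ∀ t ≤ (0 : ℝ), ∀ x ∈ strip Ω₀,
    HasDerivWithinAt (fun s => u s x) (Lop a b c (u t) x) (Iic (0 : ℝ)) t
  bdry : ∀ t ≤ (0 : ℝ), ∀ x ∈ frontier (strip Ω₀), u t x = 0

/-- Membership in `E_d`: an ancient solution with exponential growth of order `d`. -/
def MemEd {n : ℕ} (Ω₀ : Set (Fin n → ℝ))
    (a : (Fin (n + 1) → ℝ) → Fin (n + 1) → Fin (n + 1) → ℝ)
    (b : (Fin (n + 1) → ℝ) → Fin (n + 1) → ℝ) (c : (Fin (n + 1) → ℝ) → ℝ)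
    (d : ℝ) (u : ℝ → (Fin (n + 1) → ℝ) → ℝ) : Prop :=
  IsAncientSolution Ω₀ a b c u ∧
  ∃ C > (0 : ℝ), ∀ t ≤ (0 : ℝ), ∀ x ∈ strip Ω₀,
    |u t x| ≤ C * Real.exp (d * (Real.sqrt (∑ i, x i ^ 2) + Real.sqrt |t|))

/-! ### Cutoff functions -/

/-- The derivative of `Real.smoothTransition` is bounded, being continuous and supported
in `[0, 1]`. -/
lemma exists_smoothTransition_deriv_bound :
    ∃ M > (0 : ℝ), ∀ s, |deriv Real.smoothTransition s| ≤ M := by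
  have hc : Continuous (deriv Real.smoothTransition) :=
    (Real.smoothTransition.contDiff (n := 1)).continuous_deriv le_rfl
  obtain ⟨M, hM⟩ := isCompact_Icc.exists_bound_of_continuousOn
    (s := Icc (0 : ℝ) 1) hc.continuousOn
  refine ⟨max M 1, by positivity, fun s => ?_⟩
  by_cases hs : s ∈ Icc (0 : ℝ) 1
  · exact (hM s hs).trans (le_max_left _ _)
  · have h0 : deriv Real.smoothTransition s = 0 := by
      rcases not_and_or.1 hs with h | h
      · have : Real.smoothTransition =ᶠ[nhds s] fun _ => (0 : ℝ) := by
          filter_upwards [Iio_mem_nhds (not_le.1 h)] with y hy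
          exact Real.smoothTransition.zero_of_nonpos (le_of_lt hy)
        rw [this.deriv_eq]; simp
      · have : Real.smoothTransition =ᶠ[nhds s] fun _ => (1 : ℝ) := by
          filter_upwards [Ioi_mem_nhds (not_le.1 h)] with y hy
          exact Real.smoothTransition.one_of_one_le (le_of_lt hy)
        rw [this.deriv_eq]; simp
    rw [h0]; simp

/-- Cutoff in time: rises from `0` at `α` to `1` at `β`. -/
lemma exists_time_cutoff : ∃ M > (0 : ℝ), ∀ α β : ℝ, α < β → ∃ τ : ℝ → ℝ, ContDiff ℝ 1 τ ∧
    (∀ s, 0 ≤ τ s) ∧ (∀ s, τ s ≤ 1) ∧ (∀ s, s ≤ α → τ s = 0) ∧ (∀ s, β ≤ s → τ s = 1) ∧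
    (∀ s, |deriv τ s| ≤ M / (β - α)) ∧ (∀ s, β < s → deriv τ s = 0) ∧
    (∀ s, s < α → deriv τ s = 0) := by
  obtain ⟨M, hM0, hM⟩ := exists_smoothTransition_deriv_bound
  refine ⟨M, hM0, fun α β h => ?_⟩
  have hp : 0 < β - α := by linarith
  have e0 : ∀ s, s ≤ α → Real.smoothTransition ((s - α) / (β - α)) = 0 := fun s hs =>
    Real.smoothTransition.zero_of_nonpos (div_nonpos_of_nonpos_of_nonneg (by linarith) hp.le)
  have e1 : ∀ s, β ≤ s → Real.smoothTransition ((s - α) / (β - α)) = 1 := fun s hs =>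
    Real.smoothTransition.one_of_one_le (by rw [le_div_iff₀ hp]; linarith)
  refine ⟨fun s => Real.smoothTransition ((s - α) / (β - α)), ?_, ?_, ?_, e0, e1, ?_, ?_, ?_⟩
  · exact Real.smoothTransition.contDiff.comp (by fun_prop)
  · exact fun s => Real.smoothTransition.nonneg _
  · exact fun s => Real.smoothTransition.le_one _
  · intro s
    have h1 : HasDerivAt (fun s => Real.smoothTransition ((s - α) / (β - α)))
        (deriv Real.smoothTransition ((s - α) / (β - α)) * (1 / (β - α))) s :=
      HasDerivAt.comp s
        ((Real.smoothTransition.contDiff (n := 1)).differentiable (by norm_num) _).hasDerivAt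
        (((hasDerivAt_id s).sub_const α).div_const _)
    rw [h1.deriv, abs_mul, abs_of_pos (a := 1 / (β - α)) (by positivity), mul_one_div]
    gcongr
    exact hM _
  · intro s hs
    have : (fun s => Real.smoothTransition ((s - α) / (β - α))) =ᶠ[nhds s] fun _ => (1 : ℝ) := by
      filter_upwards [Ioi_mem_nhds hs] with y hy using e1 y (le_of_lt hy)
    rw [this.deriv_eq]; simp
  · intro s hs
    have : (fun s => Real.smoothTransition ((s - α) / (β - α))) =ᶠ[nhds s] fun _ => (0 : ℝ) := by
      filter_upwards [Iio_mem_nhds hs] with y hy using e0 y (le_of_lt hy)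
    rw [this.deriv_eq]; simp

/-- Cutoff in the unbounded direction: `1` on `[-r, r]`, supported in `[-R, R]`. -/
lemma exists_space_cutoff : ∃ M > (0 : ℝ), ∀ r R : ℝ, 0 < r → r < R → ∃ ζ : ℝ → ℝ,
    ContDiff ℝ 1 ζ ∧ (∀ s, 0 ≤ ζ s) ∧ (∀ s, ζ s ≤ 1) ∧ (∀ s, R ≤ |s| → ζ s = 0) ∧
    (∀ s, |s| ≤ r → ζ s = 1) ∧ (∀ s, |deriv ζ s| ≤ M / (R - r)) ∧
    (∀ s, |s| < r → deriv ζ s = 0) ∧ (∀ s, R ≤ |s| → deriv ζ s = 0) := by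
  obtain ⟨M, hM0, hM⟩ := exists_time_cutoff
  refine ⟨2 * M, by positivity, fun r R hr hrR => ?_⟩
  obtain ⟨τ, hτ, h0, h1, hz, ho, hb, -, -⟩ := hM (-R) (-r) (by linarith)
  have hτd : Differentiable ℝ τ := hτ.differentiable (by norm_num)
  -- the product of the two one-sided cutoffs
  have hd : ∀ s, HasDerivAt (fun s => τ s * τ (-s)) (deriv τ s * τ (-s) + τ s * (-deriv τ (-s))) s := by
    intro s
    refine (hτd s).hasDerivAt.mul ?_
    have := HasDerivAt.scomp s (hτd (-s)).hasDerivAt (hasDerivAt_neg s)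
    simpa [Function.comp_def] using this
  have hC : ContDiff ℝ 1 (fun s => τ s * τ (-s)) := hτ.mul (hτ.comp contDiff_neg)
  have hZ : ∀ s, R ≤ |s| → τ s * τ (-s) = 0 := by
    intro s hs
    rcases le_abs.1 hs with h | h
    · rw [hz (-s) (by linarith), mul_zero]
    · rw [hz s (by linarith), zero_mul]
  have hO : ∀ s, |s| ≤ r → τ s * τ (-s) = 1 := by
    intro s hs
    obtain ⟨h, h'⟩ := abs_le.1 hs
    rw [ho s h, ho (-s) (by linarith), mul_one]
  refine ⟨fun s => τ s * τ (-s), hC, fun s => mul_nonneg (h0 _) (h0 _),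
    fun s => mul_le_one₀ (h1 _) (h0 _) (h1 _), hZ, hO, ?_, ?_, ?_⟩
  · intro s
    rw [(hd s).deriv]
    have e : -r - -R = R - r := by ring
    rw [e] at hb
    have a1 : |deriv τ s * τ (-s)| ≤ M / (R - r) := by
      rw [abs_mul, abs_of_nonneg (h0 (-s))]
      exact (mul_le_of_le_one_right (abs_nonneg _) (h1 _)).trans (hb s)
    have a2 : |τ s * (-deriv τ (-s))| ≤ M / (R - r) := by
      rw [abs_mul, abs_of_nonneg (h0 s), abs_neg]
      exact (mul_le_of_le_one_left (abs_nonneg _) (h1 _)).trans (hb (-s))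
    calc _ ≤ _ := abs_add_le _ _
      _ ≤ M / (R - r) + M / (R - r) := add_le_add a1 a2
      _ = _ := by ring
  · intro s hs
    have : (fun s => τ s * τ (-s)) =ᶠ[nhds s] fun _ => (1 : ℝ) := by
      have : IsOpen {y : ℝ | |y| < r} := isOpen_lt continuous_abs continuous_const
      filter_upwards [this.mem_nhds hs] with y hy using hO y (le_of_lt hy)
    rw [this.deriv_eq]; simp
  · intro s hs
    -- `s` is a minimum of the nonnegative cutoff
    have : IsLocalMin (fun s => τ s * τ (-s)) s := by
      refine Filter.Eventually.of_forall fun y => ?_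
      simp only [hZ s hs]
      exact mul_nonneg (h0 _) (h0 _)
    exact this.deriv_eq_zero

/-! ### Truncations of the identity and of the square -/

/-- A continuous even profile: `0` on `[-δ, δ]`, `1` outside `[-2δ, 2δ]`, linear in between. -/
def trK (δ s : ℝ) : ℝ := max 0 (min 1 ((|s| - δ) / δ))

/-- Truncated identity, the primitive of `trK`. -/
def trPsi (δ s : ℝ) : ℝ := ∫ σ in (0 : ℝ)..s, trK δ σ

/-- Truncated identity whose derivative is `trK ^ 2`. -/
def trG (δ s : ℝ) : ℝ := ∫ σ in (0 : ℝ)..s, trK δ σ ^ 2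

/-- Truncation of `s² / 2`: the primitive of `trG`. -/
def trPhi (δ s : ℝ) : ℝ := ∫ σ in (0 : ℝ)..s, trG δ σ

lemma trK_cont (δ : ℝ) : Continuous (trK δ) := by unfold trK; fun_prop

lemma trK_nonneg (δ s : ℝ) : 0 ≤ trK δ s := le_max_left _ _

lemma trK_le_one (δ s : ℝ) : trK δ s ≤ 1 := by
  unfold trK; exact max_le zero_le_one (min_le_left _ _)

lemma trK_neg (δ s : ℝ) : trK δ (-s) = trK δ s := by simp [trK]

lemma trK_zero {δ s : ℝ} (hδ : 0 < δ) (h : |s| ≤ δ) : trK δ s = 0 := by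
  unfold trK
  exact max_eq_left ((min_le_right _ _).trans (div_nonpos_of_nonpos_of_nonneg (by linarith) hδ.le))

lemma trK_one {δ s : ℝ} (hδ : 0 < δ) (h : 2 * δ ≤ |s|) : trK δ s = 1 := by
  unfold trK
  rw [min_eq_left, max_eq_right zero_le_one]
  rw [le_div_iff₀ hδ]; linarith

lemma trK_mono {δ s t : ℝ} (hδ : 0 < δ) (h : |s| ≤ |t|) : trK δ s ≤ trK δ t := by
  unfold trK; gcongr

lemma trPsi_hasDerivAt (δ s : ℝ) : HasDerivAt (trPsi δ) (trK δ s) s :=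
  intervalIntegral.integral_hasDerivAt_right ((trK_cont δ).intervalIntegrable _ _)
    ((trK_cont δ).stronglyMeasurableAtFilter _ _) (trK_cont δ).continuousAt

lemma trG_hasDerivAt (δ s : ℝ) : HasDerivAt (trG δ) (trK δ s ^ 2) s :=
  intervalIntegral.integral_hasDerivAt_right (((trK_cont δ).pow 2).intervalIntegrable _ _)
    (((trK_cont δ).pow 2).stronglyMeasurableAtFilter _ _) ((trK_cont δ).pow 2).continuousAt

lemma trG_cont (δ : ℝ) : Continuous (trG δ) :=
  continuous_iff_continuousAt.2 fun s => (trG_hasDerivAt δ s).continuousAt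

lemma trPhi_hasDerivAt (δ s : ℝ) : HasDerivAt (trPhi δ) (trG δ s) s :=
  intervalIntegral.integral_hasDerivAt_right ((trG_cont δ).intervalIntegrable _ _)
    ((trG_cont δ).stronglyMeasurableAtFilter _ _) (trG_cont δ).continuousAt

lemma trPhi_cont (δ : ℝ) : Continuous (trPhi δ) :=
  continuous_iff_continuousAt.2 fun s => (trPhi_hasDerivAt δ s).continuousAt

lemma trPsi_cont (δ : ℝ) : Continuous (trPsi δ) :=
  continuous_iff_continuousAt.2 fun s => (trPsi_hasDerivAt δ s).continuousAt

lemma trG_contDiff (δ : ℝ) : ContDiff ℝ 1 (trG δ) := by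
  rw [contDiff_one_iff_deriv]
  refine ⟨fun s => (trG_hasDerivAt δ s).differentiableAt, ?_⟩
  rw [funext fun s => (trG_hasDerivAt δ s).deriv]
  exact (trK_cont δ).pow 2

lemma trPsi_contDiff (δ : ℝ) : ContDiff ℝ 1 (trPsi δ) := by
  rw [contDiff_one_iff_deriv]
  refine ⟨fun s => (trPsi_hasDerivAt δ s).differentiableAt, ?_⟩
  rw [funext fun s => (trPsi_hasDerivAt δ s).deriv]
  exact trK_cont δ

lemma trPsi_neg (δ s : ℝ) : trPsi δ (-s) = -trPsi δ s := by
  have := intervalIntegral.integral_comp_neg (a := 0) (b := s) (trK δ)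
  simp only [trK_neg, neg_zero] at this
  unfold trPsi
  rw [this, intervalIntegral.integral_symm]

lemma trG_neg (δ s : ℝ) : trG δ (-s) = -trG δ s := by
  have := intervalIntegral.integral_comp_neg (a := 0) (b := s) (fun x => trK δ x ^ 2)
  simp only [trK_neg, neg_zero] at this
  unfold trG
  rw [this, intervalIntegral.integral_symm]

lemma trPhi_neg (δ s : ℝ) : trPhi δ (-s) = trPhi δ s := by
  have := intervalIntegral.integral_comp_neg (a := 0) (b := s) (trG δ)
  simp only [trG_neg, neg_zero, intervalIntegral.integral_neg] at this
  unfold trPhi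
  rw [intervalIntegral.integral_symm, ← this, neg_neg]

/-- The basic inequalities between the truncations for `s ≥ 0`; the other sign follows by
symmetry. -/
lemma tr_nonneg {δ s : ℝ} (hδ : 0 < δ) (hs : 0 ≤ s) :
    s - 2 * δ ≤ trPsi δ s ∧ 0 ≤ trPsi δ s ∧ trPsi δ s ≤ s ∧ 0 ≤ trG δ s ∧
      trG δ s ≤ trK δ s * trPsi δ s := by
  have ik : ∀ a b, IntervalIntegrable (trK δ) volume a b := fun a b =>
    (trK_cont δ).intervalIntegrable _ _
  have ik2 : ∀ a b, IntervalIntegrable (fun σ => trK δ σ ^ 2) volume a b := fun a b =>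
    ((trK_cont δ).pow 2).intervalIntegrable _ _
  have p0 : ∀ t, 0 ≤ t → 0 ≤ trPsi δ t := fun t ht =>
    intervalIntegral.integral_nonneg ht fun σ _ => trK_nonneg δ σ
  refine ⟨?_, p0 s hs, ?_, intervalIntegral.integral_nonneg hs fun σ _ => sq_nonneg _, ?_⟩
  · rcases le_total s (2 * δ) with h | h
    · exact (by linarith : s - 2 * δ ≤ 0).trans (p0 s hs)
    · have : trPsi δ s = (∫ σ in (0 : ℝ)..(2 * δ), trK δ σ) + ∫ σ in (2 * δ)..s, trK δ σ :=
        (intervalIntegral.integral_add_adjacent_intervals (ik _ _) (ik _ _)).symm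
      rw [this]
      have h2 : ∫ σ in (2 * δ)..s, trK δ σ = ∫ σ in (2 * δ)..s, (1 : ℝ) := by
        refine intervalIntegral.integral_congr fun σ hσ => ?_
        rw [uIcc_of_le h] at hσ
        exact trK_one hδ (hσ.1.trans (le_abs_self σ))
      have h3 := p0 (2 * δ) (by linarith)
      unfold trPsi at h3
      rw [h2]; simp; linarith
  · have : trPsi δ s ≤ ∫ σ in (0 : ℝ)..s, (1 : ℝ) :=
      intervalIntegral.integral_mono_on hs (ik _ _) (by simp) fun σ _ => trK_le_one δ σ
    simpa using this
  · unfold trG trPsi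
    rw [← intervalIntegral.integral_const_mul]
    refine intervalIntegral.integral_mono_on hs (ik2 _ _) ((ik _ _).const_mul _) fun σ hσ => ?_
    rw [sq]
    refine mul_le_mul_of_nonneg_right (trK_mono hδ ?_) (trK_nonneg _ _)
    rw [abs_of_nonneg hσ.1, abs_of_nonneg hs]; exact hσ.2

lemma tr_abs {δ : ℝ} (s : ℝ) (hδ : 0 < δ) :
    |s| - 2 * δ ≤ |trPsi δ s| ∧ |trPsi δ s| ≤ |s| ∧ |trG δ s| ≤ trK δ s * |trPsi δ s| ∧
      0 ≤ trG δ s * s := by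
  rcases le_total 0 s with h | h
  · obtain ⟨h1, h2, h3, h4, h5⟩ := tr_nonneg hδ h
    rw [abs_of_nonneg h, abs_of_nonneg h2, abs_of_nonneg h4]
    exact ⟨h1, h3, h5, mul_nonneg h4 h⟩
  · obtain ⟨h1, h2, h3, h4, h5⟩ := tr_nonneg hδ (neg_nonneg.2 h)
    rw [trPsi_neg] at h1 h2 h3 h5
    rw [trG_neg] at h4 h5
    rw [trK_neg] at h5
    rw [abs_of_nonpos h, abs_of_nonpos (neg_nonneg.1 h2), abs_of_nonpos (neg_nonneg.1 h4)]
    exact ⟨h1, h3, h5, by nlinarith⟩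

lemma trG_abs_le {δ : ℝ} (s : ℝ) (hδ : 0 < δ) : |trG δ s| ≤ trK δ s * |s| := by
  obtain ⟨-, h2, h3, -⟩ := tr_abs s hδ
  exact h3.trans (mul_le_mul_of_nonneg_left h2 (trK_nonneg _ _))

lemma trG_mul_le {δ : ℝ} (s : ℝ) (hδ : 0 < δ) : trG δ s * s ≤ trPsi δ s ^ 2 + 2 * δ * |s| := by
  obtain ⟨h1, h2, h3, -⟩ := tr_abs s hδ
  have h4 : |trG δ s| ≤ |trPsi δ s| :=
    h3.trans (mul_le_of_le_one_left (abs_nonneg _) (trK_le_one _ _))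
  calc trG δ s * s ≤ |trG δ s| * |s| := by rw [← abs_mul]; exact le_abs_self _
    _ ≤ |trPsi δ s| * |s| := by gcongr
    _ ≤ |trPsi δ s| * (|trPsi δ s| + 2 * δ) := by gcongr; linarith
    _ = |trPsi δ s| ^ 2 + 2 * δ * |trPsi δ s| := by ring
    _ ≤ |trPsi δ s| ^ 2 + 2 * δ * |s| := by gcongr
    _ = _ := by rw [sq_abs]

lemma trPsi_sq_ge {δ : ℝ} (s : ℝ) (hδ : 0 < δ) : s ^ 2 - 4 * δ * |s| ≤ trPsi δ s ^ 2 := by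
  obtain ⟨h1, h2, -, -⟩ := tr_abs s hδ
  rw [← sq_abs s, ← sq_abs (trPsi δ s)]
  have := abs_nonneg s
  nlinarith [abs_nonneg (trPsi δ s)]

lemma trPsi_zero {δ s : ℝ} (hδ : 0 < δ) (h : |s| ≤ δ) : trPsi δ s = 0 := by
  have : trPsi δ s = ∫ σ in (0 : ℝ)..s, (0 : ℝ) := by
    refine intervalIntegral.integral_congr fun σ hσ => trK_zero hδ ?_
    exact (by simpa using abs_sub_left_of_mem_uIcc hσ : |σ| ≤ |s|).trans h
  simpa using this

lemma trG_zero {δ s : ℝ} (hδ : 0 < δ) (h : |s| ≤ δ) : trG δ s = 0 := by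
  have h1 := trG_abs_le s hδ
  rw [trK_zero hδ h, zero_mul] at h1
  exact abs_nonpos_iff.1 h1

lemma trPhi_zero {δ s : ℝ} (hδ : 0 < δ) (h : |s| ≤ δ) : trPhi δ s = 0 := by
  have : trPhi δ s = ∫ σ in (0 : ℝ)..s, (0 : ℝ) := by
    refine intervalIntegral.integral_congr fun σ hσ => trG_zero hδ ?_
    exact (by simpa using abs_sub_left_of_mem_uIcc hσ : |σ| ≤ |s|).trans h
  simpa using this

lemma trG_abs_le' {δ : ℝ} (s : ℝ) (hδ : 0 < δ) : |trG δ s| ≤ |s| :=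
  (trG_abs_le s hδ).trans (mul_le_of_le_one_left (abs_nonneg _) (trK_le_one _ _))

lemma trPhi_lip {δ S s t : ℝ} (hδ : 0 < δ) (hs : |s| ≤ S) (ht : |t| ≤ S) :
    |trPhi δ s - trPhi δ t| ≤ S * |s - t| := by
  unfold trPhi
  rw [intervalIntegral.integral_interval_sub_left ((trG_cont δ).intervalIntegrable _ _)
    ((trG_cont δ).intervalIntegrable _ _)]
  rw [← Real.norm_eq_abs]
  refine intervalIntegral.norm_integral_le_of_norm_le_const fun σ hσ => ?_
  have h1 : σ ∈ uIcc t s := uIoc_subset_uIcc hσ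
  have : uIcc t s ⊆ Icc (-S) S := by
    rw [← uIcc_of_le (by linarith [abs_nonneg s] : -S ≤ S)]
    apply uIcc_subset_uIcc <;> rw [uIcc_of_le (by linarith [abs_nonneg s])] <;>
      exact abs_le.1 ‹_›
  exact (trG_abs_le' σ hδ).trans (abs_le.2 (this h1))

lemma trPhi_nonneg {δ : ℝ} (s : ℝ) (hδ : 0 < δ) : 0 ≤ trPhi δ s := by
  rcases le_total 0 s with h | h
  · exact intervalIntegral.integral_nonneg h fun σ hσ => (tr_nonneg hδ hσ.1).2.2.2.1
  · rw [← trPhi_neg]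
    exact intervalIntegral.integral_nonneg (by linarith) fun σ hσ => (tr_nonneg hδ hσ.1).2.2.2.1

lemma trPhi_le {δ : ℝ} (s : ℝ) (hδ : 0 < δ) : trPhi δ s ≤ s ^ 2 := by
  have h := trPhi_lip hδ (le_refl |s|) (t := 0) (by simp)
  rw [trPhi_zero hδ (s := 0) (by simp [hδ.le]), sub_zero, sub_zero, ← sq, sq_abs] at h
  exact (le_abs_self _).trans h

/-! ### A Poincaré inequality in which only the volume of the cross-section enters -/

lemma sq_intervalIntegral_le {w : ℝ → ℝ} (hw : Continuous w) :
    (∫ s in (0 : ℝ)..1, w s) ^ 2 ≤ ∫ s in (0 : ℝ)..1, w s ^ 2 := by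
  set m := ∫ s in (0 : ℝ)..1, w s with hm
  have h0 : 0 ≤ ∫ s in (0 : ℝ)..1, (w s - m) ^ 2 :=
    intervalIntegral.integral_nonneg zero_le_one fun s _ => sq_nonneg _
  have i1 : IntervalIntegrable (fun s => w s ^ 2) volume 0 1 := (hw.pow 2).intervalIntegrable _ _
  have i2 : IntervalIntegrable (fun s => 2 * m * w s) volume 0 1 :=
    (continuous_const.mul hw).intervalIntegrable _ _
  have h1 : ∫ s in (0 : ℝ)..1, (w s - m) ^ 2 =
      (∫ s in (0 : ℝ)..1, w s ^ 2) - 2 * m * m + m ^ 2 := by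
    have e : ∀ s, (w s - m) ^ 2 = w s ^ 2 - 2 * m * w s + m ^ 2 := fun s => by ring
    simp_rw [e]
    rw [intervalIntegral.integral_add (i1.sub i2) (by simp), intervalIntegral.integral_sub i1 i2,
      intervalIntegral.integral_const_mul, ← hm]
    simp
  nlinarith

lemma fderiv_apply_eq_sum_pd {n : ℕ} (f : (Fin (n + 1) → ℝ) → ℝ) (x h : Fin (n + 1) → ℝ) :
    fderiv ℝ f x h = ∑ i, h i * pd i f x := by
  conv_lhs => rw [← Finset.univ_sum_single h, map_sum]
  refine Finset.sum_congr rfl fun i _ => ?_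
  have : (Pi.single i (h i) : Fin (n + 1) → ℝ) = h i • Pi.single i 1 := by
    rw [← Pi.single_smul]; simp
  rw [this, map_smul, smul_eq_mul, pd]

/-- `L²` bound for a translation along the cross-section; a weight depending on `x₀` only is
invariant under such translations. -/
lemma lintegral_translate_le {n : ℕ} {f : (Fin (n + 1) → ℝ) → ℝ} (hf : ContDiff ℝ 1 f)
    {η : ℝ → ℝ} (hη : Continuous η) (hη0 : ∀ s, 0 ≤ η s) {ℓ : ℝ}
    (y : Fin n → ℝ) (hy : ∀ i, |y i| ≤ ℓ) :
    ∫⁻ x, ENNReal.ofReal (η (x 0) * (f (x + Fin.cons 0 y) - f x) ^ 2) ≤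
      ENNReal.ofReal ((n + 1) * ℓ ^ 2) *
        ∫⁻ x, ENNReal.ofReal (η (x 0) * ∑ i, pd i f x ^ 2) := by
  set h : Fin (n + 1) → ℝ := Fin.cons 0 y with hh
  have hfd : Differentiable ℝ f := hf.differentiable (by norm_num)
  have hDc : Continuous (fun x => fderiv ℝ f x h) :=
    (hf.continuous_fderiv (by norm_num)).clm_apply continuous_const
  -- fundamental theorem of calculus along the segment
  have key : ∀ x, η (x 0) * (f (x + h) - f x) ^ 2 ≤
      ∫ s in (0 : ℝ)..1, η (x 0) * (fderiv ℝ f (x + s • h) h) ^ 2 := by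
    intro x
    have hc : Continuous fun s : ℝ => fderiv ℝ f (x + s • h) h :=
      hDc.comp (by fun_prop : Continuous fun s : ℝ => x + s • h)
    have hd : ∀ s : ℝ, HasDerivAt (fun s : ℝ => f (x + s • h)) (fderiv ℝ f (x + s • h) h) s := by
      intro s
      have h1 : HasDerivAt (fun s : ℝ => x + s • h) h s := by
        simpa using ((hasDerivAt_id s).smul_const h).const_add x
      exact (hfd (x + s • h)).hasFDerivAt.comp_hasDerivAt s h1
    have e := intervalIntegral.integral_eq_sub_of_hasDerivAt (a := 0) (b := 1)
      (fun s _ => hd s) (hc.intervalIntegrable _ _)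
    simp only [one_smul, zero_smul, add_zero] at e
    rw [intervalIntegral.integral_const_mul, ← e]
    exact mul_le_mul_of_nonneg_left (sq_intervalIntegral_le hc) (hη0 _)
  have key2 : ∀ x, ENNReal.ofReal (η (x 0) * (f (x + h) - f x) ^ 2) ≤
      ∫⁻ s in Ioc (0 : ℝ) 1, ENNReal.ofReal (η (x 0) * (fderiv ℝ f (x + s • h) h) ^ 2) := by
    intro x
    have hc : Continuous fun s : ℝ => η (x 0) * (fderiv ℝ f (x + s • h) h) ^ 2 :=
      continuous_const.mul
        ((hDc.comp (by fun_prop : Continuous fun s : ℝ => x + s • h)).pow 2)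
    have h2 := key x
    rw [intervalIntegral.integral_of_le zero_le_one] at h2
    refine (ENNReal.ofReal_le_ofReal h2).trans (le_of_eq ?_)
    exact ofReal_integral_eq_lintegral_ofReal
      (hc.integrableOn_Ioc) (Eventually.of_forall fun s => mul_nonneg (hη0 _) (sq_nonneg _))
  have hmeas : Measurable (Function.uncurry fun (x : Fin (n + 1) → ℝ) (s : ℝ) =>
      ENNReal.ofReal (η (x 0) * (fderiv ℝ f (x + s • h) h) ^ 2)) := by
    have : Continuous fun p : (Fin (n + 1) → ℝ) × ℝ =>
        η (p.1 0) * (fderiv ℝ f (p.1 + p.2 • h) h) ^ 2 :=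
      (hη.comp (by fun_prop)).mul ((hDc.comp (by fun_prop :
        Continuous fun p : (Fin (n + 1) → ℝ) × ℝ => p.1 + p.2 • h)).pow 2)
    exact this.measurable.ennreal_ofReal
  have hh0 : h 0 = 0 := by simp [hh]
  have hhi : ∀ i, h i ^ 2 ≤ ℓ ^ 2 := by
    intro i
    refine Fin.cases ?_ (fun j => ?_) i
    · rw [hh0]; simpa using sq_nonneg ℓ
    · simp only [hh, Fin.cons_succ]
      rw [← sq_abs (y j)]
      exact pow_le_pow_left₀ (abs_nonneg _) (hy j) 2
  calc ∫⁻ x, ENNReal.ofReal (η (x 0) * (f (x + h) - f x) ^ 2)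
      ≤ ∫⁻ x : Fin (n + 1) → ℝ, ∫⁻ s in Ioc (0 : ℝ) 1,
          ENNReal.ofReal (η (x 0) * (fderiv ℝ f (x + s • h) h) ^ 2) := lintegral_mono key2
    _ = ∫⁻ s in Ioc (0 : ℝ) 1, ∫⁻ x : Fin (n + 1) → ℝ,
          ENNReal.ofReal (η (x 0) * (fderiv ℝ f (x + s • h) h) ^ 2) :=
        lintegral_lintegral_swap hmeas.aemeasurable
    _ = ∫⁻ _s in Ioc (0 : ℝ) 1, ∫⁻ x : Fin (n + 1) → ℝ,
          ENNReal.ofReal (η (x 0) * (fderiv ℝ f x h) ^ 2) := by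
        refine lintegral_congr fun s => ?_
        have := lintegral_add_right_eq_self (μ := (volume : Measure (Fin (n + 1) → ℝ)))
          (fun x => ENNReal.ofReal (η (x 0) * (fderiv ℝ f x h) ^ 2)) (s • h)
        rw [← this]
        simp [hh0]
    _ = ∫⁻ x : Fin (n + 1) → ℝ, ENNReal.ofReal (η (x 0) * (fderiv ℝ f x h) ^ 2) := by simp
    _ ≤ ∫⁻ x, ENNReal.ofReal ((n + 1) * ℓ ^ 2) *
          ENNReal.ofReal (η (x 0) * ∑ i, pd i f x ^ 2) := by
        refine lintegral_mono fun x => ?_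
        rw [← ENNReal.ofReal_mul (by positivity)]
        refine ENNReal.ofReal_le_ofReal ?_
        have h3 : (fderiv ℝ f x h) ^ 2 ≤ (n + 1) * ℓ ^ 2 * ∑ i, pd i f x ^ 2 := by
          rw [fderiv_apply_eq_sum_pd]
          refine (Finset.sum_mul_sq_le_sq_mul_sq _ _ _).trans ?_
          refine mul_le_mul_of_nonneg_right ?_ (Finset.sum_nonneg fun i _ => sq_nonneg _)
          refine (Finset.sum_le_sum fun i _ => hhi i).trans ?_
          simp
        calc _ ≤ η (x 0) * ((n + 1) * ℓ ^ 2 * ∑ i, pd i f x ^ 2) :=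
              mul_le_mul_of_nonneg_left h3 (hη0 _)
          _ = _ := by ring
    _ = _ := lintegral_const_mul' _ _ ENNReal.ofReal_ne_top

/-- Poincaré inequality on the strip. A translation by a vector of a cube of volume `2 V` moves
a given point out of the strip for at least half of the vectors, so averaging the translation
estimate over the cube bounds `f` itself. -/
lemma poincare_lintegral {n : ℕ} (hn : 1 ≤ n) {V : ℝ} (hV : 0 < V) :
    ∃ P > (0 : ℝ), ∀ Ω₀ : Set (Fin n → ℝ), MeasurableSet Ω₀ → volume Ω₀ = ENNReal.ofReal V →
      ∀ f : (Fin (n + 1) → ℝ) → ℝ, ContDiff ℝ 1 f → (∀ x, x ∉ strip Ω₀ → f x = 0) →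
      ∀ η : ℝ → ℝ, Continuous η → (∀ s, 0 ≤ η s) →
      ∫⁻ x, ENNReal.ofReal (η (x 0) * f x ^ 2) ≤
        ENNReal.ofReal P * ∫⁻ x, ENNReal.ofReal (η (x 0) * ∑ i, pd i f x ^ 2) := by
  obtain ⟨ℓ, hℓ, hℓn⟩ : ∃ ℓ : ℝ, 0 < ℓ ∧ ℓ ^ n = 2 * V :=
    ⟨(2 * V) ^ ((n : ℝ)⁻¹), by positivity, Real.rpow_inv_natCast_pow (by positivity) (by omega)⟩
  refine ⟨2 * ((n + 1) * ℓ ^ 2), by positivity, fun Ω₀ hΩ hvol f hf hf0 η hη hη0 => ?_⟩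
  set Y : Set (Fin n → ℝ) := Icc 0 (fun _ => ℓ) with hY
  have hvY : volume Y = ENNReal.ofReal (2 * V) := by
    rw [hY, Real.volume_Icc_pi]
    simp [← ENNReal.ofReal_pow hℓ.le, hℓn]
  have hYm : MeasurableSet Y := measurableSet_Icc
  have hcons : Continuous fun y : Fin n → ℝ => (Fin.cons 0 y : Fin (n + 1) → ℝ) :=
    Continuous.finCons continuous_const continuous_id
  have lower : ∀ x : Fin (n + 1) → ℝ, ENNReal.ofReal V * ENNReal.ofReal (η (x 0) * f x ^ 2) ≤
      ∫⁻ y in Y, ENNReal.ofReal (η (x 0) * (f (x + Fin.cons 0 y) - f x) ^ 2) := by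
    intro x
    set Z : Set (Fin n → ℝ) := (fun y => (fun i : Fin n => x i.succ) + y) ⁻¹' Ω₀ with hZ
    have hvZ : volume Z = ENNReal.ofReal V := by rw [hZ, measure_preimage_add, hvol]
    have hYZ : ENNReal.ofReal V ≤ volume (Y \ Z) := by
      refine le_trans ?_ le_measure_sdiff
      rw [hvY, hvZ, ← ENNReal.ofReal_sub _ hV.le]
      exact ENNReal.ofReal_le_ofReal (by linarith)
    have hm : MeasurableSet (Y \ Z) := hYm.diff (hΩ.preimage (by fun_prop))
    calc ENNReal.ofReal V * ENNReal.ofReal (η (x 0) * f x ^ 2)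
        ≤ ENNReal.ofReal (η (x 0) * f x ^ 2) * volume (Y \ Z) := by rw [mul_comm]; gcongr
      _ = ∫⁻ _y in Y \ Z, ENNReal.ofReal (η (x 0) * f x ^ 2) := by simp
      _ = ∫⁻ y in Y \ Z, ENNReal.ofReal (η (x 0) * (f (x + Fin.cons 0 y) - f x) ^ 2) := by
          refine setLIntegral_congr_fun hm fun y hy => ?_
          have : f (x + Fin.cons 0 y) = 0 := by
            refine hf0 _ fun hc => hy.2 ?_
            simpa [strip, hZ, Pi.add_def] using hc
          simp [this]
      _ ≤ _ := lintegral_mono_set sdiff_subset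
  have hmeas : Measurable (Function.uncurry fun (x : Fin (n + 1) → ℝ) (y : Fin n → ℝ) =>
      ENNReal.ofReal (η (x 0) * (f (x + Fin.cons 0 y) - f x) ^ 2)) := by
    have : Continuous fun p : (Fin (n + 1) → ℝ) × (Fin n → ℝ) =>
        η (p.1 0) * (f (p.1 + Fin.cons 0 p.2) - f p.1) ^ 2 := by
      have hc := hf.continuous
      have h1 : Continuous fun p : (Fin (n + 1) → ℝ) × (Fin n → ℝ) =>
        p.1 + (Fin.cons 0 p.2 : Fin (n + 1) → ℝ) := continuous_fst.add (hcons.comp continuous_snd)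
      exact (hη.comp (by fun_prop)).mul (((hc.comp h1).sub (hc.comp continuous_fst)).pow 2)
    exact this.measurable.ennreal_ofReal
  set D := ∫⁻ x : Fin (n + 1) → ℝ, ENNReal.ofReal (η (x 0) * ∑ i, pd i f x ^ 2) with hD
  have main : ENNReal.ofReal V * ∫⁻ x : Fin (n + 1) → ℝ, ENNReal.ofReal (η (x 0) * f x ^ 2) ≤
      ENNReal.ofReal V * (ENNReal.ofReal (2 * ((n + 1) * ℓ ^ 2)) * D) := by
    rw [← lintegral_const_mul' _ _ ENNReal.ofReal_ne_top]
    calc _ ≤ ∫⁻ x : Fin (n + 1) → ℝ, ∫⁻ y in Y,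
            ENNReal.ofReal (η (x 0) * (f (x + Fin.cons 0 y) - f x) ^ 2) := lintegral_mono lower
      _ = ∫⁻ y in Y, ∫⁻ x : Fin (n + 1) → ℝ,
            ENNReal.ofReal (η (x 0) * (f (x + Fin.cons 0 y) - f x) ^ 2) :=
          lintegral_lintegral_swap hmeas.aemeasurable
      _ ≤ ∫⁻ _y in Y, ENNReal.ofReal ((n + 1) * ℓ ^ 2) * D := by
          refine setLIntegral_mono' hYm fun y hy => ?_
          refine lintegral_translate_le hf hη hη0 y fun i => ?_
          rw [abs_of_nonneg (hy.1 i)]; exact hy.2 i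
      _ = ENNReal.ofReal ((n + 1) * ℓ ^ 2) * D * ENNReal.ofReal (2 * V) := by
          rw [lintegral_const, Measure.restrict_apply_univ, hvY]
      _ = _ := by
          rw [ENNReal.ofReal_mul (p := 2) (by norm_num), ENNReal.ofReal_mul (p := 2) (by norm_num)]
          ring
  exact (ENNReal.mul_le_mul_iff_right (by simpa using hV) ENNReal.ofReal_ne_top).1 main

/-! ### Spatial derivatives and the second derivative test -/

lemma isOpen_strip {n : ℕ} {Ω₀ : Set (Fin n → ℝ)} (hΩ : IsOpen Ω₀) : IsOpen (strip Ω₀) :=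
  hΩ.preimage (by fun_prop : Continuous fun (x : Fin (n + 1) → ℝ) (i : Fin n) => x i.succ)

lemma contDiffAt_pd {n : ℕ} {f : (Fin (n + 1) → ℝ) → ℝ} {x : Fin (n + 1) → ℝ}
    (hf : ContDiffAt ℝ 2 f x) (j : Fin (n + 1)) : ContDiffAt ℝ 1 (pd j f) x :=
  (hf.fderiv_right (m := 1) (by norm_num)).clm_apply contDiffAt_const

lemma continuousAt_pd {n : ℕ} {f : (Fin (n + 1) → ℝ) → ℝ} {x : Fin (n + 1) → ℝ}
    (hf : ContDiffAt ℝ 1 f x) (j : Fin (n + 1)) : ContinuousAt (pd j f) x :=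
  ((hf.fderiv_right (m := 0) (by norm_num)).clm_apply contDiffAt_const).continuousAt

lemma pd_pd {n : ℕ} {f : (Fin (n + 1) → ℝ) → ℝ} {x : Fin (n + 1) → ℝ}
    (hf : ContDiffAt ℝ 2 f x) (i j : Fin (n + 1)) :
    pd i (pd j f) x = fderiv ℝ (fderiv ℝ f) x (Pi.single i 1) (Pi.single j 1) := by
  have hd : DifferentiableAt ℝ (fderiv ℝ f) x :=
    (hf.fderiv_right (m := 1) (by norm_num)).differentiableAt (by norm_num)
  have := hd.hasFDerivAt.clm_apply (hasFDerivAt_const (Pi.single j 1 : Fin (n + 1) → ℝ) x)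
  unfold pd
  rw [this.fderiv]
  simp

lemma pd_sub {n : ℕ} {f g : (Fin (n + 1) → ℝ) → ℝ} {x : Fin (n + 1) → ℝ}
    (hf : DifferentiableAt ℝ f x) (hg : DifferentiableAt ℝ g x) (i : Fin (n + 1)) :
    pd i (fun y => f y - g y) x = pd i f x - pd i g x := by
  unfold pd
  rw [fderiv_fun_sub hf hg]; rfl

lemma pd_mul {n : ℕ} {f g : (Fin (n + 1) → ℝ) → ℝ} {x : Fin (n + 1) → ℝ}
    (hf : DifferentiableAt ℝ f x) (hg : DifferentiableAt ℝ g x) (i : Fin (n + 1)) :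
    pd i (fun y => f y * g y) x = f x * pd i g x + g x * pd i f x := by
  unfold pd
  rw [fderiv_fun_mul hf hg]; simp

lemma pd_sum {n : ℕ} {f : Fin (n + 1) → (Fin (n + 1) → ℝ) → ℝ} {x : Fin (n + 1) → ℝ}
    (hf : ∀ j, DifferentiableAt ℝ (f j) x) (i : Fin (n + 1)) :
    pd i (fun y => ∑ j, f j y) x = ∑ j, pd i (f j) x := by
  unfold pd
  rw [fderiv_fun_sum fun j _ => hf j]; simp

lemma pd_congr {n : ℕ} {f g : (Fin (n + 1) → ℝ) → ℝ} {x : Fin (n + 1) → ℝ}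
    (h : f =ᶠ[nhds x] g) (i : Fin (n + 1)) : pd i f x = pd i g x := by
  unfold pd; rw [h.fderiv_eq]

lemma pd_coord {n : ℕ} (A : ℝ) (c : ℝ) (i j : Fin (n + 1)) (x : Fin (n + 1) → ℝ) :
    pd i (fun y => A * (y j - c)) x = if i = j then A else 0 := by
  have : HasFDerivAt (fun y : Fin (n + 1) → ℝ => A * (y j - c))
      (A • ContinuousLinearMap.proj (R := ℝ) (φ := fun _ : Fin (n + 1) => ℝ) j) x :=
    ((hasFDerivAt_apply j x).sub_const c).const_mul A
  unfold pd
  rw [this.fderiv]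
  simp [Pi.single_apply, eq_comm]

lemma pd_sqdist {n : ℕ} (A : ℝ) (c : Fin (n + 1) → ℝ) (j : Fin (n + 1)) (x : Fin (n + 1) → ℝ) :
    pd j (fun y => A * ∑ i, (y i - c i) ^ 2) x = 2 * A * (x j - c j) := by
  have : HasFDerivAt (fun y : Fin (n + 1) → ℝ => A * ∑ i, (y i - c i) ^ 2)
      (A • ∑ i, (2 * (x i - c i)) •
        ContinuousLinearMap.proj (R := ℝ) (φ := fun _ : Fin (n + 1) => ℝ) i) x := by
    refine HasFDerivAt.const_mul (HasFDerivAt.fun_sum fun i _ => ?_) A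
    simpa using ((hasFDerivAt_apply i x).sub_const (c i)).pow 2
  unfold pd
  rw [this.fderiv]
  simp [Pi.single_apply]
  ring

/-- Necessary second order condition at an interior maximum. -/
lemma snd_fderiv_nonpos_of_isLocalMax {n : ℕ} {f : (Fin (n + 1) → ℝ) → ℝ}
    {x : Fin (n + 1) → ℝ} (hf : ContDiffAt ℝ 2 f x) (hm : IsLocalMax f x)
    (ξ : Fin (n + 1) → ℝ) : fderiv ℝ (fderiv ℝ f) x ξ ξ ≤ 0 := by
  by_contra! hpos
  have hline : ∀ s : ℝ, HasDerivAt (fun s : ℝ => x + s • ξ) ξ s := fun s => by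
    simpa using ((hasDerivAt_id s).smul_const ξ).const_add x
  have hlc : ContinuousAt (fun s : ℝ => x + s • ξ) 0 := (hline 0).continuousAt
  have hx0 : x + (0 : ℝ) • ξ = x := by simp
  have hlt : Tendsto (fun s : ℝ => x + s • ξ) (nhds 0) (nhds x) := by
    simpa [ContinuousAt] using hlc
  set φ : ℝ → ℝ := fun s => f (x + s • ξ) with hφ
  have hev : ∀ᶠ y in nhds x, ContDiffAt ℝ 2 f y := hf.eventually (by simp)
  have hd1 : deriv φ =ᶠ[nhds 0] fun s => fderiv ℝ f (x + s • ξ) ξ := by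
    filter_upwards [hlt.eventually hev] with s hs
    exact ((hs.differentiableAt (by norm_num)).hasFDerivAt.comp_hasDerivAt s (hline s)).deriv
  have hd : DifferentiableAt ℝ (fderiv ℝ f) x :=
    (hf.fderiv_right (m := 1) (by norm_num)).differentiableAt (by norm_num)
  have hd2 : deriv (deriv φ) 0 = fderiv ℝ (fderiv ℝ f) x ξ ξ := by
    rw [hd1.deriv_eq]
    have h1 : HasDerivAt (fun s : ℝ => fderiv ℝ f (x + s • ξ)) (fderiv ℝ (fderiv ℝ f) x ξ) 0 := by
      have := hd.hasFDerivAt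
      rw [← hx0] at this
      have h2 := this.comp_hasDerivAt (0 : ℝ) (hline 0)
      rw [hx0] at h2
      exact h2
    simpa using (h1.clm_apply (hasDerivAt_const (0 : ℝ) ξ)).deriv
  have hmax : IsLocalMax φ 0 := by
    have := hlt.eventually hm
    simpa [IsLocalMax, IsMaxFilter, hφ] using this
  have hcont : ContinuousAt φ 0 := by
    refine ContinuousAt.comp (g := f) ?_ hlc
    rw [hx0]; exact hf.continuousAt
  have hmin : IsLocalMin φ 0 := isLocalMin_of_deriv_deriv_pos (by rw [hd2]; exact hpos)
    hmax.deriv_eq_zero hcont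
  -- a function with both a local minimum and a local maximum at `0` is locally constant
  have hconst : φ =ᶠ[nhds 0] fun _ => φ 0 := by
    filter_upwards [hmin, hmax] with s h1 h2 using le_antisymm h2 h1
  have : deriv (deriv φ) 0 = 0 := by
    rw [hconst.deriv.deriv_eq]; simp
  rw [hd2] at this
  exact hpos.ne' this

open scoped MatrixOrder in
/-- The contraction of a form with nonnegative quadratic part (not necessarily symmetric) with
a symmetric nonpositive form is nonpositive. -/
lemma sum_mul_nonpos {m : ℕ} {A H : Fin m → Fin m → ℝ}
    (hA : ∀ ξ : Fin m → ℝ, 0 ≤ ∑ i, ∑ j, A i j * ξ i * ξ j)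
    (hs : ∀ i j, H i j = H j i) (hH : ∀ ξ : Fin m → ℝ, ∑ i, ∑ j, ξ i * H i j * ξ j ≤ 0) :
    ∑ i, ∑ j, A i j * H i j ≤ 0 := by
  have hps : (Matrix.of fun i j => -H i j : Matrix (Fin m) (Fin m) ℝ).PosSemidef := by
    refine Matrix.PosSemidef.of_dotProduct_mulVec_nonneg ?_ fun ξ => ?_
    · ext i j; simp [hs j i]
    · have := hH ξ
      simp only [dotProduct, Matrix.mulVec, Matrix.of_apply, Pi.star_apply, star_trivial,
        Finset.mul_sum]
      rw [← neg_nonpos, ← Finset.sum_neg_distrib]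
      refine le_trans (le_of_eq ?_) this
      refine Finset.sum_congr rfl fun i _ => ?_
      rw [← Finset.sum_neg_distrib]
      exact Finset.sum_congr rfl fun j _ => by ring
  obtain ⟨B, hB⟩ := CStarAlgebra.nonneg_iff_eq_star_mul_self.1 (Matrix.nonneg_iff_posSemidef.2 hps)
  have hB' : ∀ i j, H i j = -∑ k, B k i * B k j := by
    intro i j
    have := congrFun (congrFun hB i) j
    simp [Matrix.mul_apply, Matrix.star_apply] at this
    linarith
  have : ∑ i, ∑ j, A i j * H i j = -∑ k, ∑ i, ∑ j, A i j * B k i * B k j := by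
    simp_rw [hB', mul_neg, Finset.mul_sum, Finset.sum_neg_distrib]
    congr 1
    symm
    rw [Finset.sum_comm]
    refine Finset.sum_congr rfl fun i _ => ?_
    rw [Finset.sum_comm]
    exact Finset.sum_congr rfl fun j _ => Finset.sum_congr rfl fun k _ => by ring
  rw [this, neg_nonpos]
  exact Finset.sum_nonneg fun k _ => hA (B k)

/-- Nondivergence form of `L` on functions of class `C²`. -/
lemma Lop_expand {n : ℕ} {a : (Fin (n + 1) → ℝ) → Fin (n + 1) → Fin (n + 1) → ℝ}
    {b : (Fin (n + 1) → ℝ) → Fin (n + 1) → ℝ} {c : (Fin (n + 1) → ℝ) → ℝ}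
    {f : (Fin (n + 1) → ℝ) → ℝ} {x : Fin (n + 1) → ℝ}
    (ha : ∀ i j, DifferentiableAt ℝ (fun y => a y i j) x) (hf : ContDiffAt ℝ 2 f x) :
    Lop a b c f x = (∑ i, ∑ j, a x i j * pd i (pd j f) x) +
      (∑ i, ∑ j, pd i (fun y => a y i j) x * pd j f x) + (∑ i, b x i * pd i f x) + c x * f x := by
  unfold Lop
  congr 2
  rw [← Finset.sum_add_distrib]
  refine Finset.sum_congr rfl fun i _ => ?_
  have hp : ∀ j, DifferentiableAt ℝ (pd j f) x := fun j =>
    (contDiffAt_pd hf j).differentiableAt (by norm_num)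
  rw [pd_sum (fun j => (ha i j).fun_mul (hp j)), ← Finset.sum_add_distrib]
  refine Finset.sum_congr rfl fun j _ => ?_
  rw [pd_mul (ha i j) (hp j)]
  ring

/-! ### One-sided Lipschitz bound in time, by the maximum principle -/

lemma exists_bound_on {X : Type*} [TopologicalSpace X] {K : Set X} (hK : IsCompact K) {f : X → ℝ}
    (hf : ContinuousOn f K) : ∃ M, 0 ≤ M ∧ ∀ x ∈ K, |f x| ≤ M := by
  obtain ⟨M, hM⟩ := hK.exists_bound_of_continuousOn hf
  exact ⟨max M 0, le_max_right _ _, fun x hx => (hM x hx).trans (le_max_left _ _)⟩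

lemma exists_bound_on_family {X ι : Type*} [Fintype ι] [TopologicalSpace X] {K : Set X}
    (hK : IsCompact K) {f : ι → X → ℝ} (hf : ∀ i, ContinuousOn (f i) K) :
    ∃ M, 0 ≤ M ∧ ∀ i, ∀ x ∈ K, |f i x| ≤ M := by
  choose M hM0 hM using fun i => exists_bound_on hK (hf i)
  refine ⟨∑ i, M i, Finset.sum_nonneg fun i _ => hM0 i, fun i x hx => (hM i x hx).trans ?_⟩
  exact Finset.single_le_sum (f := M) (fun i _ => hM0 i) (Finset.mem_univ i)

/-- The increments of a solution after time `t₀` are bounded linearly in time, uniformly on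
compact sets. Near `x₀` the solution stays below the barrier
`u t₀ x + A |x - x₀|² + M (t - t₀)`: at a positive interior maximum of the difference the equation
would give `M ≤ M₀`, with `M₀` depending on `u t₀`, `A` and the coefficients only. No regularity
of `∂ₜ u` enters. -/
lemma forward_upper_bound {n : ℕ} {Ω₀ : Set (Fin n → ℝ)} (hΩ : IsOpen Ω₀) {lam Lam : ℝ}
    (hlam : 0 < lam) {a : (Fin (n + 1) → ℝ) → Fin (n + 1) → Fin (n + 1) → ℝ}
    {b : (Fin (n + 1) → ℝ) → Fin (n + 1) → ℝ} {c : (Fin (n + 1) → ℝ) → ℝ}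
    (hco : GoodCoeffs Ω₀ lam Lam a b c) {u : ℝ → (Fin (n + 1) → ℝ) → ℝ}
    (hu : IsAncientSolution Ω₀ a b c u) {t₀ : ℝ} (ht₀ : t₀ ≤ 0) {K : Set (Fin (n + 1) → ℝ)}
    (hK : IsCompact K) (hKs : K ⊆ strip Ω₀) :
    ∃ M, 0 ≤ M ∧ ∀ x ∈ K, ∀ t ∈ Icc t₀ 0, u t x - u t₀ x ≤ M * (t - t₀) := by
  have hS := isOpen_strip hΩ
  obtain ⟨ρ, hρ, hρs⟩ := hK.exists_cthickening_subset_open hS hKs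
  set K' := Metric.cthickening ρ K with hK'
  have hK'c : IsCompact K' := hK.cthickening
  have hball : ∀ x ∈ K, Metric.closedBall x ρ ⊆ K' := fun x hx =>
    Metric.closedBall_subset_cthickening hx ρ
  have hC2 : ∀ t ≤ 0, ∀ x ∈ strip Ω₀, ContDiffAt ℝ 2 (u t) x := fun t ht x hx =>
    (hu.space_reg t ht).contDiffAt (hS.mem_nhds hx)
  have hA1 : ∀ i j, ∀ x ∈ strip Ω₀, ContDiffAt ℝ 1 (fun y => a y i j) x := fun i j x hx =>
    (hco.a_reg i j).contDiffAt (hS.mem_nhds hx)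
  -- bounds on the compact neighbourhood
  obtain ⟨Mu, hMu0, hMu⟩ : ∃ M, 0 ≤ M ∧ ∀ t ∈ Icc t₀ 0, ∀ x ∈ K', |u t x| ≤ M := by
    obtain ⟨M, hM0, hM⟩ := exists_bound_on (isCompact_Icc.prod hK'c)
      (hu.cont.mono (prod_mono (fun t ht => ht.2) (hρs.trans subset_closure)) :
        ContinuousOn (fun p : ℝ × (Fin (n + 1) → ℝ) => u p.1 p.2) (Icc t₀ 0 ×ˢ K'))
    exact ⟨M, hM0, fun t ht x hx => hM (t, x) ⟨ht, hx⟩⟩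
  obtain ⟨G, hG0, hG⟩ := exists_bound_on_family (ι := Fin (n + 1)) hK'c
    (f := fun j => pd j (u t₀)) fun j x hx =>
      (contDiffAt_pd (hC2 t₀ ht₀ x (hρs hx)) j).continuousAt.continuousWithinAt
  obtain ⟨H, hH0, hH⟩ := exists_bound_on_family (ι := Fin (n + 1) × Fin (n + 1)) hK'c
    (f := fun ij => pd ij.1 (pd ij.2 (u t₀))) fun ij x hx =>
      (continuousAt_pd (contDiffAt_pd (hC2 t₀ ht₀ x (hρs hx)) ij.2) ij.1).continuousWithinAt
  obtain ⟨β, hβ0, hβ⟩ := exists_bound_on_family (ι := Fin (n + 1) × Fin (n + 1)) hK'c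
    (f := fun ij => pd ij.1 (fun y => a y ij.1 ij.2)) fun ij x hx =>
      (continuousAt_pd (hA1 ij.1 ij.2 x (hρs hx)) ij.1).continuousWithinAt
  obtain ⟨Mb, hMb⟩ := hco.b_bdd
  obtain ⟨Mc, hMc⟩ := hco.c_bdd
  set A : ℝ := 2 * Mu / ρ ^ 2 with hAdef
  have hA0 : 0 ≤ A := by positivity
  have hAρ : A * ρ ^ 2 = 2 * Mu := by rw [hAdef]; field_simp
  set N : ℝ := (n + 1 : ℝ) with hN
  set M₀ : ℝ := N * (N * (|Lam| * (H + 2 * A))) + N * (N * (β * (G + 2 * A * ρ))) +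
    N * (|Mb| * (G + 2 * A * ρ)) + |Mc| * Mu with hM₀
  have hM₀0 : 0 ≤ M₀ := by positivity
  refine ⟨M₀ + 1, by positivity, fun xs hxs t ht => ?_⟩
  by_contra! hcon
  -- the barrier comparison function on the closed cylinder
  set W : ℝ × (Fin (n + 1) → ℝ) → ℝ := fun p =>
    u p.1 p.2 - u t₀ p.2 - A * ∑ i, (p.2 i - xs i) ^ 2 - (M₀ + 1) * (p.1 - t₀) with hW
  set Z : Set (ℝ × (Fin (n + 1) → ℝ)) := Icc t₀ 0 ×ˢ Metric.closedBall xs ρ with hZ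
  have hBs : Metric.closedBall xs ρ ⊆ strip Ω₀ := (hball xs hxs).trans hρs
  have hWc : ContinuousOn W Z := by
    have h1 : ContinuousOn (fun p : ℝ × (Fin (n + 1) → ℝ) => u p.1 p.2) Z :=
      hu.cont.mono (prod_mono (fun t ht => ht.2) (hBs.trans subset_closure))
    have h2 : ContinuousOn (fun p : ℝ × (Fin (n + 1) → ℝ) => u t₀ p.2) Z :=
      ((hu.space_reg t₀ ht₀).continuousOn.mono hBs).comp continuousOn_snd fun p hp => hp.2
    refine ((h1.sub h2).sub ?_).sub ?_ <;> fun_prop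
  have hxsZ : (t, xs) ∈ Z := ⟨ht, Metric.mem_closedBall_self hρ.le⟩
  obtain ⟨⟨t₁, x₁⟩, hp₁, hmax⟩ := (isCompact_Icc.prod
    (isCompact_closedBall xs ρ)).exists_isMaxOn ⟨_, hxsZ⟩ hWc
  have hmax' : ∀ s ∈ Icc t₀ 0, ∀ y ∈ Metric.closedBall xs ρ, W (s, y) ≤ W (t₁, x₁) :=
    fun s hs y hy => hmax (show (s, y) ∈ Z from ⟨hs, hy⟩)
  have hWpos : 0 < W (t₁, x₁) := by
    refine lt_of_lt_of_le ?_ (hmax hxsZ)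
    simp only [hW]
    simp
    linarith
  obtain ⟨ht₁, hx₁⟩ := hp₁
  simp only at ht₁ hx₁
  have hx₁s : x₁ ∈ strip Ω₀ := hBs hx₁
  have hx₁K : x₁ ∈ K' := hball xs hxs hx₁
  have hsumnn : 0 ≤ A * ∑ i, (x₁ i - xs i) ^ 2 :=
    mul_nonneg hA0 (Finset.sum_nonneg fun i _ => sq_nonneg _)
  have ht₁' : t₀ < t₁ := by
    refine lt_of_le_of_ne ht₁.1 fun h => ?_
    simp only [hW, ← h] at hWpos
    simp at hWpos
    linarith
  have hx₁' : x₁ ∈ Metric.ball xs ρ := by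
    by_contra hnb
    have hd : ρ ≤ dist x₁ xs := by simpa using hnb
    -- on the lateral boundary some coordinate difference reaches `ρ`
    have : ∃ i, ρ ≤ |x₁ i - xs i| := by
      by_contra! hlt
      have := (dist_pi_lt_iff hρ).2 fun i => by rw [Real.dist_eq]; exact hlt i
      linarith
    obtain ⟨i, hi⟩ := this
    have h1 : ρ ^ 2 ≤ ∑ i, (x₁ i - xs i) ^ 2 := by
      calc ρ ^ 2 ≤ |x₁ i - xs i| ^ 2 := pow_le_pow_left₀ hρ.le hi 2
        _ = (x₁ i - xs i) ^ 2 := sq_abs _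
        _ ≤ _ := Finset.single_le_sum (f := fun i => (x₁ i - xs i) ^ 2)
            (fun i _ => sq_nonneg _) (Finset.mem_univ i)
    have h2 : 2 * Mu ≤ A * ∑ i, (x₁ i - xs i) ^ 2 := by
      rw [← hAρ]; exact mul_le_mul_of_nonneg_left h1 hA0
    have h3 := abs_le.1 (hMu t₁ ht₁ x₁ hx₁K)
    have h4 := abs_le.1 (hMu t₀ ⟨le_rfl, ht₀⟩ x₁ hx₁K)
    have h5 : 0 ≤ (M₀ + 1) * (t₁ - t₀) := mul_nonneg (by linarith) (by linarith)
    simp only [hW] at hWpos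
    linarith [h3.2, h4.1]
  -- time derivative at the maximum
  have htime : M₀ + 1 ≤ Lop a b c (u t₁) x₁ := by
    have hd : HasDerivWithinAt (fun s => u s x₁ - (M₀ + 1) * (s - t₀))
        (Lop a b c (u t₁) x₁ - (M₀ + 1)) (Icc t₀ t₁) t₁ := by
      have h1 := (hu.pde t₁ ht₁.2 x₁ hx₁s).mono
        (fun s hs => (hs.2.trans ht₁.2 : s ≤ 0) : Icc t₀ t₁ ⊆ Iic 0)
      have h2 : HasDerivWithinAt (fun s : ℝ => (M₀ + 1) * (s - t₀)) (M₀ + 1) (Icc t₀ t₁) t₁ := by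
        simpa using (((hasDerivAt_id t₁).sub_const t₀).const_mul (M₀ + 1)).hasDerivWithinAt
      exact h1.sub h2
    have hm : IsLocalMaxOn (fun s => u s x₁ - (M₀ + 1) * (s - t₀)) (Icc t₀ t₁) t₁ := by
      refine eventually_nhdsWithin_of_forall fun s hs => ?_
      have := hmax' s ⟨hs.1, hs.2.trans ht₁.2⟩ x₁ hx₁
      simp only [hW] at this
      linarith
    have h3 := hm.hasFDerivWithinAt_nonpos hd.hasFDerivWithinAt
      (sub_mem_posTangentConeAt_of_segment_subset (x := t₁) (y := t₀)
        (by rw [segment_symm, segment_eq_Icc ht₁'.le]))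
    simp at h3
    nlinarith
  -- spatial derivatives at the maximum
  set Fx : (Fin (n + 1) → ℝ) → ℝ := fun x => u t₁ x - u t₀ x - A * ∑ i, (x i - xs i) ^ 2 with hFx
  have hq : ContDiff ℝ 2 fun x : Fin (n + 1) → ℝ => A * ∑ i, (x i - xs i) ^ 2 := by fun_prop
  have hFC : ContDiffAt ℝ 2 Fx x₁ :=
    ((hC2 t₁ ht₁.2 x₁ hx₁s).sub (hC2 t₀ ht₀ x₁ hx₁s)).sub hq.contDiffAt
  have hFm : IsLocalMax Fx x₁ := by
    filter_upwards [Metric.isOpen_ball.mem_nhds hx₁'] with y hy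
    have := hmax' t₁ ht₁ y (Metric.ball_subset_closedBall hy)
    simp only [hW] at this
    simp only [hFx]
    linarith
  have hpdF : ∀ y ∈ strip Ω₀, ∀ j, pd j Fx y =
      pd j (u t₁) y - pd j (u t₀) y - 2 * A * (y j - xs j) := by
    intro y hy j
    have d1 := (hC2 t₁ ht₁.2 y hy).differentiableAt (by norm_num)
    have d0 := (hC2 t₀ ht₀ y hy).differentiableAt (by norm_num)
    rw [hFx, pd_sub (d1.fun_sub d0) (hq.differentiable (by norm_num) y), pd_sub d1 d0, pd_sqdist]
  have hgrad : ∀ j, pd j (u t₁) x₁ = pd j (u t₀) x₁ + 2 * A * (x₁ j - xs j) := by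
    intro j
    have h1 := hpdF x₁ hx₁s j
    have h2 : pd j Fx x₁ = 0 := by unfold pd; rw [hFm.fderiv_eq_zero]; simp
    linarith
  have hhess : ∀ i j, pd i (pd j (u t₁)) x₁ =
      pd i (pd j Fx) x₁ + pd i (pd j (u t₀)) x₁ + if i = j then 2 * A else 0 := by
    intro i j
    have he : pd j Fx =ᶠ[nhds x₁] fun y =>
        (pd j (u t₁) y - pd j (u t₀) y) - 2 * A * (y j - xs j) := by
      filter_upwards [hS.mem_nhds hx₁s] with y hy using hpdF y hy j
    have d1 := (contDiffAt_pd (hC2 t₁ ht₁.2 x₁ hx₁s) j).differentiableAt (by norm_num)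
    have d0 := (contDiffAt_pd (hC2 t₀ ht₀ x₁ hx₁s) j).differentiableAt (by norm_num)
    rw [pd_congr he, pd_sub (d1.fun_sub d0) (by fun_prop), pd_sub d1 d0, pd_coord]
    ring
  have htr : ∑ i, ∑ j, a x₁ i j * pd i (pd j Fx) x₁ ≤ 0 := by
    refine sum_mul_nonpos (fun ξ => ?_) (fun i j => ?_) fun ξ => ?_
    · exact le_trans (mul_nonneg hlam.le (Finset.sum_nonneg fun i _ => sq_nonneg _))
        (hco.elliptic x₁ hx₁s ξ)
    · rw [pd_pd hFC, pd_pd hFC]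
      exact (hFC.isSymmSndFDerivAt (by simp)) _ _
    · refine le_trans (le_of_eq ?_) (snd_fderiv_nonpos_of_isLocalMax hFC hFm ξ)
      have hsum : ξ = ∑ i, ξ i • (Pi.single i 1 : Fin (n + 1) → ℝ) := by
        conv_lhs => rw [← Finset.univ_sum_single ξ]
        refine Finset.sum_congr rfl fun i _ => ?_
        rw [← Pi.single_smul]; simp
      conv_rhs => rw [hsum]
      simp only [map_sum, map_smul, ContinuousLinearMap.sum_apply, ContinuousLinearMap.smul_apply,
        smul_eq_mul, pd_pd hFC, Finset.mul_sum]
      rw [Finset.sum_comm]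
      refine Finset.sum_congr rfl fun i _ => Finset.sum_congr rfl fun j _ => by ring
  -- upper bound for `L u` at the maximum
  have hcoord : ∀ j, |x₁ j - xs j| ≤ ρ := fun j => by
    rw [← Real.dist_eq]; exact (dist_le_pi_dist x₁ xs j).trans hx₁
  have hg : ∀ j, |pd j (u t₁) x₁| ≤ G + 2 * A * ρ := by
    intro j
    rw [hgrad j]
    refine (abs_add_le _ _).trans (add_le_add (hG j x₁ hx₁K) ?_)
    rw [abs_mul, abs_of_nonneg (by positivity : 0 ≤ 2 * A)]
    exact mul_le_mul_of_nonneg_left (hcoord j) (by positivity)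
  have hcard : ∀ C : ℝ, ∑ _i : Fin (n + 1), C = N * C := fun C => by simp [hN]
  have s1 : ∑ i, ∑ j, a x₁ i j * pd i (pd j (u t₁)) x₁ ≤ N * (N * (|Lam| * (H + 2 * A))) := by
    have e : ∑ i, ∑ j, a x₁ i j * pd i (pd j (u t₁)) x₁ =
        ∑ i, ∑ j, a x₁ i j * pd i (pd j Fx) x₁ +
        ∑ i, ∑ j, a x₁ i j * (pd i (pd j (u t₀)) x₁ + if i = j then 2 * A else 0) := by
      rw [← Finset.sum_add_distrib]
      refine Finset.sum_congr rfl fun i _ => ?_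
      rw [← Finset.sum_add_distrib]
      exact Finset.sum_congr rfl fun j _ => by rw [hhess]; ring
    have e2 : ∑ i, ∑ j, a x₁ i j * (pd i (pd j (u t₀)) x₁ + if i = j then 2 * A else 0) ≤
        ∑ _i : Fin (n + 1), ∑ _j : Fin (n + 1), |Lam| * (H + 2 * A) := by
      refine Finset.sum_le_sum fun i _ => Finset.sum_le_sum fun j _ => ?_
      refine (le_abs_self _).trans ?_
      rw [abs_mul]
      refine mul_le_mul ((hco.a_bdd x₁ hx₁s i j).trans (le_abs_self _)) ?_ (abs_nonneg _)
        (abs_nonneg _)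
      refine (abs_add_le _ _).trans (add_le_add (hH (i, j) x₁ hx₁K) ?_)
      split_ifs
      · rw [abs_of_nonneg (by positivity)]
      · simpa using hA0
    simp only [hcard] at e2
    linarith
  have s2 : ∑ i, ∑ j, pd i (fun y => a y i j) x₁ * pd j (u t₁) x₁ ≤
      N * (N * (β * (G + 2 * A * ρ))) := by
    have : ∑ i, ∑ j, pd i (fun y => a y i j) x₁ * pd j (u t₁) x₁ ≤
        ∑ _i : Fin (n + 1), ∑ _j : Fin (n + 1), β * (G + 2 * A * ρ) := by
      refine Finset.sum_le_sum fun i _ => Finset.sum_le_sum fun j _ => ?_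
      refine (le_abs_self _).trans ?_
      rw [abs_mul]
      exact mul_le_mul (hβ (i, j) x₁ hx₁K) (hg j) (abs_nonneg _) hβ0
    simpa only [hcard] using this
  have s3 : ∑ i, b x₁ i * pd i (u t₁) x₁ ≤ N * (|Mb| * (G + 2 * A * ρ)) := by
    have : ∑ i, b x₁ i * pd i (u t₁) x₁ ≤ ∑ _i : Fin (n + 1), |Mb| * (G + 2 * A * ρ) := by
      refine Finset.sum_le_sum fun i _ => ?_
      refine (le_abs_self _).trans ?_
      rw [abs_mul]
      exact mul_le_mul ((hMb x₁ hx₁s i).trans (le_abs_self _)) (hg i) (abs_nonneg _) (abs_nonneg _)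
    simpa only [hcard] using this
  have s4 : c x₁ * u t₁ x₁ ≤ |Mc| * Mu := by
    refine (le_abs_self _).trans ?_
    rw [abs_mul]
    exact mul_le_mul ((hMc x₁ hx₁s).trans (le_abs_self _)) (hMu t₁ ht₁ x₁ hx₁K) (abs_nonneg _)
      (abs_nonneg _)
  rw [Lop_expand (fun i j => (hA1 i j x₁ hx₁s).differentiableAt (by norm_num))
    (hC2 t₁ ht₁.2 x₁ hx₁s)] at htime
  linarith

lemma Lop_neg {n : ℕ} {a : (Fin (n + 1) → ℝ) → Fin (n + 1) → Fin (n + 1) → ℝ}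
    {b : (Fin (n + 1) → ℝ) → Fin (n + 1) → ℝ} {c : (Fin (n + 1) → ℝ) → ℝ}
    (f : (Fin (n + 1) → ℝ) → ℝ) (x : Fin (n + 1) → ℝ) :
    Lop a b c (fun y => -f y) x = -Lop a b c f x := by
  have h : ∀ (g : (Fin (n + 1) → ℝ) → ℝ) i y, pd i (fun z => -g z) y = -pd i g y := by
    intro g i y; unfold pd; rw [fderiv_fun_neg]; rfl
  unfold Lop
  simp only [h, mul_neg, Finset.sum_neg_distrib]
  ring

lemma IsAncientSolution.neg {n : ℕ} {Ω₀ : Set (Fin n → ℝ)}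
    {a : (Fin (n + 1) → ℝ) → Fin (n + 1) → Fin (n + 1) → ℝ}
    {b : (Fin (n + 1) → ℝ) → Fin (n + 1) → ℝ} {c : (Fin (n + 1) → ℝ) → ℝ}
    {u : ℝ → (Fin (n + 1) → ℝ) → ℝ} (hu : IsAncientSolution Ω₀ a b c u) :
    IsAncientSolution Ω₀ a b c (fun t x => -u t x) where
  cont := hu.cont.neg
  space_reg t ht := (hu.space_reg t ht).neg
  pde t ht x hx := by rw [Lop_neg]; exact (hu.pde t ht x hx).neg
  bdry t ht x hx := by rw [hu.bdry t ht x hx, neg_zero]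

lemma forward_bound {n : ℕ} {Ω₀ : Set (Fin n → ℝ)} (hΩ : IsOpen Ω₀) {lam Lam : ℝ}
    (hlam : 0 < lam) {a : (Fin (n + 1) → ℝ) → Fin (n + 1) → Fin (n + 1) → ℝ}
    {b : (Fin (n + 1) → ℝ) → Fin (n + 1) → ℝ} {c : (Fin (n + 1) → ℝ) → ℝ}
    (hco : GoodCoeffs Ω₀ lam Lam a b c) {u : ℝ → (Fin (n + 1) → ℝ) → ℝ}
    (hu : IsAncientSolution Ω₀ a b c u) {t₀ : ℝ} (ht₀ : t₀ ≤ 0) {K : Set (Fin (n + 1) → ℝ)}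
    (hK : IsCompact K) (hKs : K ⊆ strip Ω₀) :
    ∃ M, 0 ≤ M ∧ ∀ x ∈ K, ∀ t ∈ Icc t₀ 0, |u t x - u t₀ x| ≤ M * (t - t₀) := by
  obtain ⟨M, hM0, hM⟩ := forward_upper_bound hΩ hlam hco hu ht₀ hK hKs
  obtain ⟨M', -, hM'⟩ := forward_upper_bound hΩ hlam hco hu.neg ht₀ hK hKs
  refine ⟨max M M', hM0.trans (le_max_left _ _), fun x hx t ht => abs_le'.2 ⟨?_, ?_⟩⟩
  · exact (hM x hx t ht).trans
      (mul_le_mul_of_nonneg_right (le_max_left _ _) (by linarith [ht.1]))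
  · refine le_trans ?_ ((hM' x hx t ht).trans
      (mul_le_mul_of_nonneg_right (le_max_right _ _) (by linarith [ht.1])))
    linarith

/-! ### Extension by zero and differentiation of the truncated energy -/

/-- The extension of a solution by zero outside the strip, frozen at its final value for `t > 0`
so that it is defined and jointly continuous on all of `ℝ × ℝ^{n+1}`. -/
def extU {n : ℕ} (Ω₀ : Set (Fin n → ℝ)) (u : ℝ → (Fin (n + 1) → ℝ) → ℝ) (t : ℝ)
    (x : Fin (n + 1) → ℝ) : ℝ :=
  (strip Ω₀).indicator (u (min t 0)) x

/-- The compact box `[-R, R] × closure Ω₀`. -/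
def cbox {n : ℕ} (Ω₀ : Set (Fin n → ℝ)) (R : ℝ) : Set (Fin (n + 1) → ℝ) :=
  {x | |x 0| ≤ R ∧ (fun i : Fin n => x i.succ) ∈ closure Ω₀}

lemma isCompact_cbox {n : ℕ} {Ω₀ : Set (Fin n → ℝ)} (hb : Bornology.IsBounded Ω₀) (R : ℝ) :
    IsCompact (cbox Ω₀ R) := by
  refine Metric.isCompact_of_isClosed_isBounded ?_ ?_
  · refine (isClosed_le (continuous_apply (0 : Fin (n + 1))).abs continuous_const).inter ?_
    exact isClosed_closure.preimage
      (by fun_prop : Continuous fun (x : Fin (n + 1) → ℝ) (i : Fin n) => x i.succ)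
  · obtain ⟨ρ, hρ⟩ := hb.closure.subset_closedBall 0
    refine (Metric.isBounded_closedBall (x := (0 : Fin (n + 1) → ℝ)) (r := max (max R ρ) 0)).subset
      fun x hx => ?_
    rw [mem_closedBall_zero_iff, pi_norm_le_iff_of_nonneg (le_max_right _ _)]
    intro i
    refine le_trans ?_ (le_max_left _ _)
    refine Fin.cases ?_ (fun j => ?_) i
    · exact hx.1.trans (le_max_left _ _)
    · have h1 := hρ hx.2
      rw [mem_closedBall_zero_iff] at h1
      exact ((norm_le_pi_norm (fun i : Fin n => x i.succ) j).trans h1).trans (le_max_right _ _)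

lemma extU_of_mem {n : ℕ} {Ω₀ : Set (Fin n → ℝ)} {u : ℝ → (Fin (n + 1) → ℝ) → ℝ} {t : ℝ}
    (ht : t ≤ 0) {x : Fin (n + 1) → ℝ} (hx : x ∈ strip Ω₀) : extU Ω₀ u t x = u t x := by
  simp [extU, hx, min_eq_left ht]

lemma extU_of_notMem {n : ℕ} {Ω₀ : Set (Fin n → ℝ)} {u : ℝ → (Fin (n + 1) → ℝ) → ℝ} {t : ℝ}
    {x : Fin (n + 1) → ℝ} (hx : x ∉ strip Ω₀) : extU Ω₀ u t x = 0 := by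
  simp [extU, hx]

lemma continuous_extU {n : ℕ} {Ω₀ : Set (Fin n → ℝ)}
    {a : (Fin (n + 1) → ℝ) → Fin (n + 1) → Fin (n + 1) → ℝ}
    {b : (Fin (n + 1) → ℝ) → Fin (n + 1) → ℝ} {c : (Fin (n + 1) → ℝ) → ℝ}
    {u : ℝ → (Fin (n + 1) → ℝ) → ℝ} (hu : IsAncientSolution Ω₀ a b c u) :
    Continuous fun p : ℝ × (Fin (n + 1) → ℝ) => extU Ω₀ u p.1 p.2 := by
  have h : (fun p : ℝ × (Fin (n + 1) → ℝ) => extU Ω₀ u p.1 p.2) =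
      (univ ×ˢ strip Ω₀).indicator fun p => u (min p.1 0) p.2 := by
    ext p
    by_cases hp : p.2 ∈ strip Ω₀ <;> simp [extU, hp, indicator]
  rw [h]
  refine continuous_indicator ?_ ?_
  · rintro ⟨t, x⟩ hp
    rw [frontier_univ_prod_eq] at hp
    exact hu.bdry _ (min_le_right _ _) x hp.2
  · have := hu.cont.comp
      (f := fun p : ℝ × (Fin (n + 1) → ℝ) => ((min p.1 0, p.2) : ℝ × (Fin (n + 1) → ℝ)))
      (s := closure (univ ×ˢ strip Ω₀)) (by fun_prop) ?_
    · exact this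
    · rintro ⟨t, x⟩ hp
      rw [closure_prod_eq] at hp
      exact ⟨mem_Iic.2 (min_le_right _ _), hp.2⟩

lemma continuous_extU_right {n : ℕ} {Ω₀ : Set (Fin n → ℝ)}
    {a : (Fin (n + 1) → ℝ) → Fin (n + 1) → Fin (n + 1) → ℝ}
    {b : (Fin (n + 1) → ℝ) → Fin (n + 1) → ℝ} {c : (Fin (n + 1) → ℝ) → ℝ}
    {u : ℝ → (Fin (n + 1) → ℝ) → ℝ} (hu : IsAncientSolution Ω₀ a b c u) (t : ℝ) :
    Continuous (extU Ω₀ u t) :=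
  (continuous_extU hu).comp (by fun_prop : Continuous fun x : Fin (n + 1) → ℝ => (t, x))

lemma notMem_cbox {n : ℕ} {Ω₀ : Set (Fin n → ℝ)} {R : ℝ} {x : Fin (n + 1) → ℝ}
    (hx : x ∉ cbox Ω₀ R) : R < |x 0| ∨ x ∉ strip Ω₀ := by
  by_contra! h
  exact hx ⟨h.1, subset_closure h.2⟩

lemma integrable_of_cbox {n : ℕ} {Ω₀ : Set (Fin n → ℝ)} (hb : Bornology.IsBounded Ω₀) {R : ℝ}
    {F : (Fin (n + 1) → ℝ) → ℝ} (hF : Continuous F) (h0 : ∀ x, x ∉ cbox Ω₀ R → F x = 0) :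
    Integrable F :=
  hF.integrable_of_hasCompactSupport (HasCompactSupport.intro (isCompact_cbox hb R) h0)

lemma continuous_integral_of_cbox {n : ℕ} {Ω₀ : Set (Fin n → ℝ)} (hb : Bornology.IsBounded Ω₀)
    {R : ℝ} {F : ℝ → (Fin (n + 1) → ℝ) → ℝ} (hF : Continuous (Function.uncurry F))
    (h0 : ∀ t x, x ∉ cbox Ω₀ R → F t x = 0) : Continuous fun t => ∫ x, F t x := by
  have h : (fun t => ∫ x, F t x) = fun t => ∫ x in cbox Ω₀ R, F t x := by
    ext t
    rw [setIntegral_eq_integral_of_forall_compl_eq_zero (h0 t)]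
  rw [h]
  exact continuous_parametric_integral_of_continuous hF (isCompact_cbox hb R)

/-- Differentiation of the truncated energy from the right in time. The truncation confines the
integrand to a compact subset of the strip, where `forward_bound` dominates the difference
quotients. The integrand of the derivative is shown to be integrable without any measurability
assumption on `b` and `c`, as a limit of difference quotients. -/
lemma energy_hasDerivWithinAt {n : ℕ} {Ω₀ : Set (Fin n → ℝ)} (hΩ : IsOpen Ω₀)
    (hb : Bornology.IsBounded Ω₀) {lam Lam : ℝ}
    (hlam : 0 < lam) {a : (Fin (n + 1) → ℝ) → Fin (n + 1) → Fin (n + 1) → ℝ}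
    {b : (Fin (n + 1) → ℝ) → Fin (n + 1) → ℝ} {c : (Fin (n + 1) → ℝ) → ℝ}
    (hco : GoodCoeffs Ω₀ lam Lam a b c) {u : ℝ → (Fin (n + 1) → ℝ) → ℝ}
    (hu : IsAncientSolution Ω₀ a b c u) {R δ : ℝ} (hδ : 0 < δ)
    {w : (Fin (n + 1) → ℝ) → ℝ} (hw : Continuous w) (hw0 : ∀ x, R < |x 0| → w x = 0)
    {t₀ : ℝ} (ht₀ : t₀ < 0) :
    Integrable (fun x => w x * (trG δ (extU Ω₀ u t₀ x) * Lop a b c (u t₀) x)) ∧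
    HasDerivWithinAt (fun t => ∫ x, w x * trPhi δ (extU Ω₀ u t x))
      (∫ x, w x * (trG δ (extU Ω₀ u t₀ x) * Lop a b c (u t₀) x)) (Ici t₀) t₀ := by
  have hUc := continuous_extU hu
  have hB := isCompact_cbox hb (Ω₀ := Ω₀) R
  have hzero : ∀ t x, x ∉ cbox Ω₀ R → w x * trPhi δ (extU Ω₀ u t x) = 0 := by
    intro t x hx
    rcases notMem_cbox hx with h | h
    · simp [hw0 x h]
    · rw [extU_of_notMem h, trPhi_zero hδ (by simp [hδ.le]), mul_zero]
  have hΦc : ∀ t, Continuous fun x => w x * trPhi δ (extU Ω₀ u t x) := fun t =>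
    hw.mul ((trPhi_cont δ).comp (continuous_extU_right hu t))
  have hΦi : ∀ t, Integrable fun x => w x * trPhi δ (extU Ω₀ u t x) := fun t =>
    integrable_of_cbox hb (hΦc t) (hzero t)
  -- the compact part of the strip on which the truncated energy density can be nonzero
  set S : Set (ℝ × (Fin (n + 1) → ℝ)) :=
    (Icc t₀ 0 ×ˢ cbox Ω₀ R) ∩ {p | δ ≤ |extU Ω₀ u p.1 p.2|} with hS
  have hSc : IsCompact S := (isCompact_Icc.prod hB).inter_right
    (isClosed_le continuous_const hUc.abs)
  set K := Prod.snd '' S with hK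
  have hKc : IsCompact K := hSc.image continuous_snd
  have hKs : K ⊆ strip Ω₀ := by
    rintro _ ⟨⟨t, x⟩, hp, rfl⟩
    by_contra hx
    have h2 : δ ≤ |extU Ω₀ u t x| := hp.2
    rw [extU_of_notMem hx, abs_zero] at h2
    linarith
  have hKB : K ⊆ cbox Ω₀ R := by
    rintro _ ⟨⟨t, x⟩, hp, rfl⟩
    exact hp.1.2
  have hoff : ∀ x ∈ cbox Ω₀ R, x ∉ K → ∀ t ∈ Icc t₀ 0, |extU Ω₀ u t x| ≤ δ := by
    intro x hx hxK t ht
    by_contra! h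
    exact hxK ⟨(t, x), ⟨⟨ht, hx⟩, h.le⟩, rfl⟩
  obtain ⟨M, hM0, hM⟩ := forward_bound hΩ hlam hco hu ht₀.le hKc hKs
  obtain ⟨W, hW0, hW⟩ := exists_bound_on hB hw.continuousOn
  obtain ⟨S0, hS0, hSb⟩ := exists_bound_on (isCompact_Icc (a := t₀) (b := 0) |>.prod hB)
    hUc.continuousOn
  set D : ℝ → (Fin (n + 1) → ℝ) → ℝ := fun t x =>
    (t - t₀)⁻¹ * (w x * trPhi δ (extU Ω₀ u t x) - w x * trPhi δ (extU Ω₀ u t₀ x)) with hD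
  set bd : (Fin (n + 1) → ℝ) → ℝ := (cbox Ω₀ R).indicator fun _ => W * (S0 * M) with hbd
  have hbdi : Integrable bd := by
    refine (integrable_indicator_iff hB.measurableSet).2 ?_
    exact integrableOn_const hB.measure_lt_top.ne
  have hDb : ∀ t, t ∈ Ioc t₀ 0 → ∀ x, ‖D t x‖ ≤ bd x := by
    intro t ht x
    have ht' : t ∈ Icc t₀ 0 := ⟨ht.1.le, ht.2⟩
    have ht0' : t₀ ∈ Icc t₀ 0 := ⟨le_rfl, ht₀.le⟩
    by_cases hx : x ∈ cbox Ω₀ R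
    swap
    · simp [hD, hbd, hx, hzero t x hx, hzero t₀ x hx]
    simp only [hbd, indicator_of_mem hx, hD]
    have hpos : 0 < t - t₀ := by linarith [ht.1]
    rw [Real.norm_eq_abs, abs_mul, abs_inv, abs_of_pos hpos, ← mul_sub, abs_mul,
      inv_mul_le_iff₀ hpos]
    by_cases hxK : x ∈ K
    · have h1 := trPhi_lip hδ (hSb (t, x) ⟨ht', hx⟩) (hSb (t₀, x) ⟨ht0', hx⟩)
      simp only at h1
      have h2 := hM x hxK t ht'
      rw [extU_of_mem ht.2 (hKs hxK), extU_of_mem ht₀.le (hKs hxK)] at h1 ⊢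
      calc |w x| * |trPhi δ (u t x) - trPhi δ (u t₀ x)|
          ≤ W * (S0 * (M * (t - t₀))) := by
            refine mul_le_mul (hW x hx) (h1.trans (mul_le_mul_of_nonneg_left h2 hS0))
              (abs_nonneg _) hW0
        _ = _ := by ring
    · rw [trPhi_zero hδ (hoff x hx hxK t ht'), trPhi_zero hδ (hoff x hx hxK t₀ ht0')]
      simp only [sub_self, abs_zero, mul_zero]
      positivity
  have hlim : ∀ x, Tendsto (fun t => D t x) (nhdsWithin t₀ (Ioi t₀))
      (nhds (w x * (trG δ (extU Ω₀ u t₀ x) * Lop a b c (u t₀) x))) := by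
    intro x
    have hder : HasDerivAt (fun t => w x * trPhi δ (extU Ω₀ u t x))
        (w x * (trG δ (extU Ω₀ u t₀ x) * Lop a b c (u t₀) x)) t₀ := by
      refine HasDerivAt.const_mul _ ?_
      by_cases hx : x ∈ strip Ω₀
      · have h1 : HasDerivAt (fun s => extU Ω₀ u s x) (Lop a b c (u t₀) x) t₀ := by
          have h2 := (hu.pde t₀ ht₀.le x hx).hasDerivAt (Iic_mem_nhds ht₀)
          refine h2.congr_of_eventuallyEq ?_
          filter_upwards [Iic_mem_nhds ht₀] with s hs
          exact extU_of_mem hs hx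
        exact (trPhi_hasDerivAt δ _).comp t₀ h1
      · simp only [extU_of_notMem hx]
        rw [trG_zero hδ (by simp [hδ.le]), zero_mul]
        exact hasDerivAt_const _ _
    have := (hasDerivAt_iff_tendsto_slope.1 hder).mono_left
      (nhdsWithin_mono t₀ (fun y (hy : t₀ < y) => hy.ne'))
    refine this.congr fun t => ?_
    simp [slope_def_field, hD, div_eq_inv_mul]
  have hev : ∀ᶠ t in nhdsWithin t₀ (Ioi t₀), t ∈ Ioc t₀ 0 := by
    filter_upwards [Ioc_mem_nhdsGT ht₀] with t ht using ht
  have hDi : ∀ t, Integrable (D t) := fun t => ((hΦi t).sub (hΦi t₀)).const_mul _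
  constructor
  · refine hbdi.mono' ?_ (ae_of_all _ fun x => ?_)
    · exact aestronglyMeasurable_of_tendsto_ae (nhdsWithin t₀ (Ioi t₀))
        (fun t => (hDi t).aestronglyMeasurable) (ae_of_all _ hlim)
    · exact le_of_tendsto (hlim x).norm (hev.mono fun t ht => hDb t ht x)
  · rw [hasDerivWithinAt_iff_tendsto_slope]
    have hset : Ici t₀ \ {t₀} = Ioi t₀ := by
      ext y; simp only [Set.mem_sdiff, mem_Ici, mem_singleton_iff, mem_Ioi]
      exact ⟨fun h => lt_of_le_of_ne h.1 (Ne.symm h.2), fun h => ⟨h.le, h.ne'⟩⟩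
    rw [hset]
    have := tendsto_integral_filter_of_dominated_convergence bd
      (l := nhdsWithin t₀ (Ioi t₀)) (F := D)
      (Eventually.of_forall fun t => (hDi t).aestronglyMeasurable)
      (hev.mono fun t ht => ae_of_all _ (hDb t ht)) hbdi (ae_of_all _ hlim)
    refine this.congr fun t => ?_
    rw [slope_def_field, hD, integral_const_mul, integral_sub (hΦi t) (hΦi t₀), div_eq_inv_mul]

/-! ### The spatial energy inequality -/

lemma Lop_congr {n : ℕ} {a : (Fin (n + 1) → ℝ) → Fin (n + 1) → Fin (n + 1) → ℝ}
    {b : (Fin (n + 1) → ℝ) → Fin (n + 1) → ℝ} {c : (Fin (n + 1) → ℝ) → ℝ}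
    {f g : (Fin (n + 1) → ℝ) → ℝ} {x : Fin (n + 1) → ℝ} (h : f =ᶠ[nhds x] g) :
    Lop a b c f x = Lop a b c g x := by
  have h1 : ∀ i, pd i (fun y => ∑ j, a y i j * pd j f y) x =
      pd i (fun y => ∑ j, a y i j * pd j g y) x := fun i => by
    refine pd_congr ?_ i
    filter_upwards [h.eventually_nhds] with y hy
    exact Finset.sum_congr rfl fun j _ => by rw [pd_congr hy j]
  simp only [Lop, h1, pd_congr h, h.eq_of_nhds]

lemma eventually_small {n : ℕ} {U : (Fin (n + 1) → ℝ) → ℝ} (hU : Continuous U) {δ : ℝ}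
    (hδ : 0 < δ) {x : Fin (n + 1) → ℝ} (hx : U x = 0) : ∀ᶠ y in nhds x, |U y| ≤ δ := by
  have h1 : Tendsto (fun y => |U y|) (nhds x) (nhds 0) := by
    simpa [hx] using hU.abs.tendsto x
  exact (h1.eventually (gt_mem_nhds hδ)).mono fun y hy => hy.le

/-- Truncating near zero removes the lack of regularity at the boundary of the strip. -/
lemma contDiff_trunc {n : ℕ} {Ω₀ : Set (Fin n → ℝ)} (hΩ : IsOpen Ω₀)
    {U : (Fin (n + 1) → ℝ) → ℝ} (hU : Continuous U) (hU0 : ∀ x, x ∉ strip Ω₀ → U x = 0)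
    {δ : ℝ} (hδ : 0 < δ) {F : ℝ → ℝ} (hF0 : ∀ s, |s| ≤ δ → F s = 0)
    {H : (Fin (n + 1) → ℝ) → ℝ} (hH : ∀ x ∈ strip Ω₀, ContDiffAt ℝ 1 H x)
    (hF : ContDiff ℝ 1 F) (hU2 : ContDiffOn ℝ 2 U (strip Ω₀)) :
    ContDiff ℝ 1 fun x => F (U x) * H x := by
  rw [contDiff_iff_contDiffAt]
  intro x
  by_cases hx : x ∈ strip Ω₀
  · have h1 : ContDiffAt ℝ 1 U x :=
      (hU2.contDiffAt ((isOpen_strip hΩ).mem_nhds hx)).of_le (by norm_num)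
    exact (hF.contDiffAt.comp x h1).mul (hH x hx)
  · have : (fun x => F (U x) * H x) =ᶠ[nhds x] fun _ => 0 := by
      filter_upwards [eventually_small hU hδ (hU0 x hx)] with y hy
      rw [hF0 _ hy, zero_mul]
    exact contDiffAt_const.congr_of_eventuallyEq this

lemma pd_comp {n : ℕ} {U : (Fin (n + 1) → ℝ) → ℝ} {x : Fin (n + 1) → ℝ}
    (hU : DifferentiableAt ℝ U x) {F : ℝ → ℝ} {F' : ℝ} (hF : HasDerivAt F F' (U x))
    (i : Fin (n + 1)) : pd i (fun y => F (U y)) x = F' * pd i U x := by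
  unfold pd
  rw [show (fun y => F (U y)) = F ∘ U from rfl, (hF.comp_hasFDerivAt x hU.hasFDerivAt).fderiv]
  simp

lemma pd_cutoff {n : ℕ} {ζ : ℝ → ℝ} (hζ : ContDiff ℝ 1 ζ) (x : Fin (n + 1) → ℝ)
    (i : Fin (n + 1)) :
    pd i (fun y => ζ (y 0) ^ 2) x = if i = 0 then 2 * ζ (x 0) * deriv ζ (x 0) else 0 := by
  have h1 : HasDerivAt (fun s => ζ s ^ 2) (2 * ζ (x 0) * deriv ζ (x 0)) (x 0) := by
    simpa using ((hζ.differentiable (by norm_num)) (x 0)).hasDerivAt.fun_pow 2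
  rw [pd_comp (U := fun y : Fin (n + 1) → ℝ => y 0) (by fun_prop) h1]
  have h2 := pd_coord 1 0 i 0 x
  simp only [sub_zero, one_mul] at h2
  rw [h2]; simp

lemma integral_pd_eq_zero {n : ℕ} {X : (Fin (n + 1) → ℝ) → ℝ} (hX : ContDiff ℝ 1 X)
    (hs : HasCompactSupport X) (i : Fin (n + 1)) :
    Integrable (pd i X) ∧ ∫ x, pd i X x = 0 := by
  have hc : Continuous (pd i X) :=
    continuous_iff_continuousAt.2 fun x => continuousAt_pd hX.contDiffAt i
  have hsu : HasCompactSupport (pd i X) := hs.fderiv_apply (𝕜 := ℝ) (Pi.single i 1)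
  have hi := hc.integrable_of_hasCompactSupport hsu (μ := volume)
  refine ⟨hi, ?_⟩
  have := integral_mul_fderiv_eq_neg_fderiv_mul_of_integrable (μ := volume) (𝕜 := ℝ)
    (f := fun _ : Fin (n + 1) → ℝ => (1 : ℝ)) (g := X) (v := Pi.single i 1) (by simp)
    (by simp only [one_mul]; exact hi) (by simpa using hX.continuous.integrable_of_hasCompactSupport hs)
    (fun x _ => by fun_prop) (fun x _ => hX.differentiable (by norm_num) x)
  simpa [pd] using this

/-- The pointwise absorption of the cross terms in the energy identity; `z` and `z'` are the values
of the cutoff and its derivative, `ξ` is the gradient of the solution. -/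
lemma energy_algebra {m : ℕ} {lam Lam ε δ z z' g k ψ U cc : ℝ} (i₀ : Fin m)
    {A : Fin m → Fin m → ℝ} {B ξ : Fin m → ℝ} (hlam : 0 < lam) (hε : 0 ≤ ε)
    (hell : lam * ∑ i, ξ i ^ 2 ≤ ∑ i, ∑ j, A i j * ξ i * ξ j) (hA : ∀ i j, |A i j| ≤ Lam)
    (hB : ∀ i, |B i| ≤ Real.sqrt ε) (hcc : cc ≤ ε)
    (hg1 : |g| ≤ k * |ψ|) (hg2 : |g| ≤ k * |U|) (hg3 : 0 ≤ g * U)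
    (hg4 : g * U ≤ ψ ^ 2 + 2 * δ * |U|) :
    -(z ^ 2 * k ^ 2 * ∑ i, (∑ j, A i j * ξ j) * ξ i) - 2 * z * z' * g * (∑ j, A i₀ j * ξ j)
      + z ^ 2 * g * (∑ i, B i * ξ i) + z ^ 2 * (cc * (g * U)) ≤
    -(lam / 2) * (z ^ 2 * ∑ i, (k * ξ i) ^ 2) + m * (4 * Lam ^ 2 / lam) * (z' ^ 2 * U ^ 2)
      + m * (ε / lam) * (z ^ 2 * ψ ^ 2) + ε * (z ^ 2 * (ψ ^ 2 + 2 * δ * |U|)) := by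
  have hsq : Real.sqrt ε ^ 2 = ε := Real.sq_sqrt hε
  have e1 : z ^ 2 * k ^ 2 * (lam * ∑ i, ξ i ^ 2) ≤
      z ^ 2 * k ^ 2 * ∑ i, (∑ j, A i j * ξ j) * ξ i := by
    refine mul_le_mul_of_nonneg_left (hell.trans (le_of_eq ?_)) (by positivity)
    refine Finset.sum_congr rfl fun i _ => ?_
    rw [Finset.sum_mul]
    exact Finset.sum_congr rfl fun j _ => by ring
  have e2 : -(2 * z * z' * g * ∑ j, A i₀ j * ξ j) ≤
      ∑ j : Fin m, (lam / 4 * (z ^ 2 * (k * ξ j) ^ 2) + 4 * Lam ^ 2 / lam * (z' ^ 2 * U ^ 2)) := by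
    rw [Finset.mul_sum, ← Finset.sum_neg_distrib]
    refine Finset.sum_le_sum fun j _ => ?_
    have h1 : |2 * z * z' * g * (A i₀ j * ξ j)| ≤
        2 * (|z| * (k * |ξ j|)) * (Lam * |z'| * |U|) := by
      simp only [abs_mul, abs_two]
      calc 2 * |z| * |z'| * |g| * (|A i₀ j| * |ξ j|)
          ≤ 2 * |z| * |z'| * (k * |U|) * (Lam * |ξ j|) := by
            have h0 : 0 ≤ k * |U| := (abs_nonneg _).trans hg2
            gcongr
            exact hA i₀ j
        _ = _ := by ring
    have h2 : 2 * (|z| * (k * |ξ j|)) * (Lam * |z'| * |U|) ≤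
        lam / 4 * (|z| * (k * |ξ j|)) ^ 2 + 4 / lam * (Lam * |z'| * |U|) ^ 2 := by
      have h3 : 0 ≤ (lam * (|z| * (k * |ξ j|)) / 2 - 2 * (Lam * |z'| * |U|)) ^ 2 / lam := by
        positivity
      have h4 : (lam * (|z| * (k * |ξ j|)) / 2 - 2 * (Lam * |z'| * |U|)) ^ 2 / lam =
        lam / 4 * (|z| * (k * |ξ j|)) ^ 2 + 4 / lam * (Lam * |z'| * |U|) ^ 2 -
          2 * (|z| * (k * |ξ j|)) * (Lam * |z'| * |U|) := by field_simp; ring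
      linarith
    refine (neg_le_abs _).trans (h1.trans (h2.trans (le_of_eq ?_)))
    simp only [mul_pow, sq_abs]
    ring
  have e3 : z ^ 2 * g * (∑ i, B i * ξ i) ≤
      ∑ i : Fin m, (lam / 4 * (z ^ 2 * (k * ξ i) ^ 2) + ε / lam * (z ^ 2 * ψ ^ 2)) := by
    rw [Finset.mul_sum]
    refine Finset.sum_le_sum fun i _ => ?_
    have h1 : g * (B i * ξ i) ≤ (k * |ξ i|) * (Real.sqrt ε * |ψ|) := by
      refine (le_abs_self _).trans ?_
      rw [abs_mul, abs_mul]
      calc |g| * (|B i| * |ξ i|) ≤ (k * |ψ|) * (Real.sqrt ε * |ξ i|) := by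
            have h0 : 0 ≤ k * |ψ| := (abs_nonneg _).trans hg1
            gcongr
            exact hB i
        _ = _ := by ring
    have h2 : (k * |ξ i|) * (Real.sqrt ε * |ψ|) ≤
        lam / 4 * (k * |ξ i|) ^ 2 + 1 / lam * (Real.sqrt ε * |ψ|) ^ 2 := by
      have h3 : 0 ≤ (lam * (k * |ξ i|) / 2 - Real.sqrt ε * |ψ|) ^ 2 / lam := by positivity
      have h4 : (lam * (k * |ξ i|) / 2 - Real.sqrt ε * |ψ|) ^ 2 / lam =
        lam / 4 * (k * |ξ i|) ^ 2 + 1 / lam * (Real.sqrt ε * |ψ|) ^ 2 -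
          (k * |ξ i|) * (Real.sqrt ε * |ψ|) := by field_simp; ring
      linarith
    calc z ^ 2 * g * (B i * ξ i) = z ^ 2 * (g * (B i * ξ i)) := by ring
      _ ≤ z ^ 2 * (lam / 4 * (k * |ξ i|) ^ 2 + 1 / lam * (Real.sqrt ε * |ψ|) ^ 2) :=
        mul_le_mul_of_nonneg_left (h1.trans h2) (sq_nonneg _)
      _ = _ := by simp only [mul_pow, sq_abs, hsq]; ring
  have e4 : z ^ 2 * (cc * (g * U)) ≤ ε * (z ^ 2 * (ψ ^ 2 + 2 * δ * |U|)) := by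
    calc z ^ 2 * (cc * (g * U)) ≤ z ^ 2 * (ε * (ψ ^ 2 + 2 * δ * |U|)) := by
          refine mul_le_mul_of_nonneg_left ?_ (sq_nonneg _)
          exact (mul_le_mul_of_nonneg_right hcc hg3).trans (mul_le_mul_of_nonneg_left hg4 hε)
      _ = _ := by ring
  rw [Finset.sum_add_distrib, ← Finset.mul_sum, ← Finset.mul_sum] at e2 e3
  simp only [Finset.sum_const, Finset.card_univ, Fintype.card_fin, nsmul_eq_mul] at e2 e3
  have e5 : z ^ 2 * k ^ 2 * (lam * ∑ i, ξ i ^ 2) = lam * (z ^ 2 * ∑ i, (k * ξ i) ^ 2) := by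
    simp only [mul_pow, ← Finset.mul_sum]; ring
  rw [e5] at e1
  linarith

lemma integral_le_of_sum {E : Type*} [MeasurableSpace E] {μ : Measure E}
    {f f₀ f₁ f₂ f₃ f₄ : E → ℝ} {c₁ c₂ c₃ c₄ : ℝ} (hf : Integrable f μ) (h₀ : Integrable f₀ μ)
    (h₁ : Integrable f₁ μ) (h₂ : Integrable f₂ μ) (h₃ : Integrable f₃ μ) (h₄ : Integrable f₄ μ)
    (h : ∀ x, f x ≤ f₀ x + (c₁ * f₁ x + (c₂ * f₂ x + (c₃ * f₃ x + c₄ * f₄ x)))) :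
    ∫ x, f x ∂μ ≤ ∫ x, f₀ x ∂μ + (c₁ * ∫ x, f₁ x ∂μ + (c₂ * ∫ x, f₂ x ∂μ +
      (c₃ * ∫ x, f₃ x ∂μ + c₄ * ∫ x, f₄ x ∂μ))) := by
  have s4 : Integrable (fun x => c₃ * f₃ x + c₄ * f₄ x) μ := (h₃.const_mul _).add (h₄.const_mul _)
  have s3 : Integrable (fun x => c₂ * f₂ x + (c₃ * f₃ x + c₄ * f₄ x)) μ := (h₂.const_mul _).add s4
  have s2 : Integrable (fun x => c₁ * f₁ x + (c₂ * f₂ x + (c₃ * f₃ x + c₄ * f₄ x))) μ :=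
    (h₁.const_mul _).add s3
  have s1 : Integrable
      (fun x => f₀ x + (c₁ * f₁ x + (c₂ * f₂ x + (c₃ * f₃ x + c₄ * f₄ x)))) μ := h₀.add s2
  refine (integral_mono hf s1 h).trans (le_of_eq ?_)
  rw [integral_add h₀ s2, integral_add (h₁.const_mul _) s3, integral_add (h₂.const_mul _) s4,
    integral_add (h₃.const_mul _) (h₄.const_mul _)]
  simp only [integral_const_mul]

/-- The energy inequality on a time slice: testing `L U` with the truncation of `ζ² U`, absorbing
the gradient terms and applying the Poincaré inequality `hP` on the strip. -/
lemma spatial_energy {n : ℕ} {Ω₀ : Set (Fin n → ℝ)} (hΩ : IsOpen Ω₀)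
    (hb : Bornology.IsBounded Ω₀) {lam Lam ε P δ R : ℝ} (hlam : 0 < lam) (hε : 0 ≤ ε) (hP0 : 0 < P)
    (hP : ∀ f : (Fin (n + 1) → ℝ) → ℝ, ContDiff ℝ 1 f → (∀ x, x ∉ strip Ω₀ → f x = 0) →
      ∀ η : ℝ → ℝ, Continuous η → (∀ s, 0 ≤ η s) →
      ∫⁻ x, ENNReal.ofReal (η (x 0) * f x ^ 2) ≤
        ENNReal.ofReal P * ∫⁻ x, ENNReal.ofReal (η (x 0) * ∑ i, pd i f x ^ 2))
    (hεP : ((n + 1 : ℝ) / lam + 1) * ε ≤ lam / (4 * P))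
    {a : (Fin (n + 1) → ℝ) → Fin (n + 1) → Fin (n + 1) → ℝ}
    {b : (Fin (n + 1) → ℝ) → Fin (n + 1) → ℝ} {c : (Fin (n + 1) → ℝ) → ℝ}
    (hco : GoodCoeffs Ω₀ lam Lam a b c) (hsm : Smallness Ω₀ b c ε)
    {U : (Fin (n + 1) → ℝ) → ℝ} (hU : Continuous U) (hU0 : ∀ x, x ∉ strip Ω₀ → U x = 0)
    (hU2 : ContDiffOn ℝ 2 U (strip Ω₀)) (hδ : 0 < δ)
    {ζ : ℝ → ℝ} (hζ : ContDiff ℝ 1 ζ) (hζ0 : ∀ s, R ≤ |s| → ζ s = 0)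
    (hζ0' : ∀ s, R ≤ |s| → deriv ζ s = 0)
    (hq : Integrable fun x => ζ (x 0) ^ 2 * (trG δ (U x) * Lop a b c U x)) :
    ∫ x, ζ (x 0) ^ 2 * (trG δ (U x) * Lop a b c U x) ≤
      -(lam / (4 * P)) * (∫ x, ζ (x 0) ^ 2 * trPsi δ (U x) ^ 2)
      + (n + 1) * (4 * Lam ^ 2 / lam) * (∫ x, deriv ζ (x 0) ^ 2 * U x ^ 2)
      + 2 * ε * δ * ∫ x, ζ (x 0) ^ 2 * |U x| := by
  have hUd : ∀ x ∈ strip Ω₀, ContDiffAt ℝ 2 U x := fun x hx =>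
    hU2.contDiffAt ((isOpen_strip hΩ).mem_nhds hx)
  have had : ∀ x ∈ strip Ω₀, ∀ i j, ContDiffAt ℝ 1 (fun y => a y i j) x := fun x hx i j =>
    (hco.a_reg i j).contDiffAt ((isOpen_strip hΩ).mem_nhds hx)
  have hζc := hζ.continuous
  have hζdc : Continuous (deriv ζ) := hζ.continuous_deriv (by norm_num)
  have hAd : ∀ x ∈ strip Ω₀, ∀ i, ContDiffAt ℝ 1 (fun y => ∑ j, a y i j * pd j U y) x :=
    fun x hx i => ContDiffAt.sum fun j _ => (had x hx i j).mul (contDiffAt_pd (hUd x hx) j)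
  have hζd : ContDiff ℝ 1 fun y : Fin (n + 1) → ℝ => ζ (y 0) ^ 2 := by
    have : ContDiff ℝ 1 fun y : Fin (n + 1) → ℝ => ζ (y 0) :=
      hζ.comp (contDiff_apply ℝ ℝ 0)
    exact this.pow 2
  -- the truncated flux
  set X : Fin (n + 1) → (Fin (n + 1) → ℝ) → ℝ := fun i y =>
    ζ (y 0) ^ 2 * (trG δ (U y) * ∑ j, a y i j * pd j U y) with hX
  have hXd : ∀ i, ContDiff ℝ 1 (X i) := fun i =>
    hζd.mul (contDiff_trunc hΩ hU hU0 hδ (fun s hs => trG_zero hδ hs)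
      (fun x hx => hAd x hx i) (trG_contDiff δ) hU2)
  have hXs : ∀ i, HasCompactSupport (X i) := fun i => by
    refine HasCompactSupport.intro (isCompact_cbox hb R) fun x hx => ?_
    rcases notMem_cbox hx with h | h
    · simp [hX, hζ0 _ h.le]
    · simp [hX, hU0 x h, trG_zero hδ (s := 0) (by simp [hδ.le])]
  have hΨd : ContDiff ℝ 1 fun x => trPsi δ (U x) := by
    simpa using contDiff_trunc hΩ hU hU0 hδ (fun s hs => trPsi_zero hδ hs)
      (H := fun _ => 1) (fun x _ => contDiffAt_const) (trPsi_contDiff δ) hU2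
  have hpdΨ : ∀ i, Continuous (pd i fun x => trPsi δ (U x)) := fun i =>
    continuous_iff_continuousAt.2 fun x => continuousAt_pd hΨd.contDiffAt i
  have hpd0 : ∀ x, x ∉ strip Ω₀ → ∀ i, pd i (fun x => trPsi δ (U x)) x = 0 := by
    intro x hx i
    have : (fun x => trPsi δ (U x)) =ᶠ[nhds x] fun _ => 0 := by
      filter_upwards [eventually_small hU hδ (hU0 x hx)] with y hy using trPsi_zero hδ hy
    rw [pd_congr this]; simp [pd]
  have hψ0 : ∀ x, x ∉ strip Ω₀ → trPsi δ (U x) = 0 := fun x hx => by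
    rw [hU0 x hx]; exact trPsi_zero hδ (by simp [hδ.le])
  have hζ0c : Continuous fun x : Fin (n + 1) → ℝ => ζ (x 0) := by fun_prop
  have hζd0c : Continuous fun x : Fin (n + 1) → ℝ => deriv ζ (x 0) := by fun_prop
  have i1 : Integrable fun x => ζ (x 0) ^ 2 * ∑ i, pd i (fun x => trPsi δ (U x)) x ^ 2 := by
    refine integrable_of_cbox hb (R := R) (Ω₀ := Ω₀) ((hζ0c.pow 2).mul
      (continuous_finsetSum _ fun i _ => (hpdΨ i).pow 2)) fun x hx => ?_
    rcases notMem_cbox hx with h | h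
    · simp [hζ0 _ h.le]
    · simp [hpd0 x h]
  have i2 : Integrable fun x => ζ (x 0) ^ 2 * trPsi δ (U x) ^ 2 := by
    refine integrable_of_cbox hb (R := R) (Ω₀ := Ω₀) ((hζ0c.pow 2).mul
      (hΨd.continuous.pow 2)) fun x hx => ?_
    rcases notMem_cbox hx with h | h
    · simp [hζ0 _ h.le]
    · simp [hψ0 x h]
  have i3 : Integrable fun x => deriv ζ (x 0) ^ 2 * U x ^ 2 := by
    refine integrable_of_cbox hb (R := R) (Ω₀ := Ω₀) ((hζd0c.pow 2).mul (hU.pow 2)) fun x hx => ?_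
    rcases notMem_cbox hx with h | h
    · simp [hζ0' _ h.le]
    · simp [hU0 x h]
  have i4 : Integrable fun x => ζ (x 0) ^ 2 * |U x| := by
    refine integrable_of_cbox hb (R := R) (Ω₀ := Ω₀) ((hζ0c.pow 2).mul hU.abs) fun x hx => ?_
    rcases notMem_cbox hx with h | h
    · simp [hζ0 _ h.le]
    · simp [hU0 x h]
  have iX : Integrable fun x => ∑ i, pd i (X i) x :=
    integrable_finsetSum _ fun i _ => (integral_pd_eq_zero (hXd i) (hXs i) i).1
  have hX0 : ∫ x, ∑ i, pd i (X i) x = 0 := by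
    rw [integral_finsetSum _ fun i _ => (integral_pd_eq_zero (hXd i) (hXs i) i).1]
    exact Finset.sum_eq_zero fun i _ => (integral_pd_eq_zero (hXd i) (hXs i) i).2
  have hpt : ∀ x, ζ (x 0) ^ 2 * (trG δ (U x) * Lop a b c U x) ≤
      ∑ i, pd i (X i) x + (-(lam / 2) * (ζ (x 0) ^ 2 * ∑ i, pd i (fun x => trPsi δ (U x)) x ^ 2)
      + (((n + 1) * (4 * Lam ^ 2 / lam)) * (deriv ζ (x 0) ^ 2 * U x ^ 2)
      + (((n + 1) * (ε / lam) + ε) * (ζ (x 0) ^ 2 * trPsi δ (U x) ^ 2)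
      + (2 * ε * δ) * (ζ (x 0) ^ 2 * |U x|)))) := by
    intro x
    by_cases hx : x ∈ strip Ω₀
    swap
    · have hXz : ∀ i, pd i (X i) x = 0 := by
        intro i
        have : X i =ᶠ[nhds x] fun _ => 0 := by
          filter_upwards [eventually_small hU hδ (hU0 x hx)] with y hy
          simp [hX, trG_zero hδ hy]
        rw [pd_congr this]; simp [pd]
      simp [hXz, hpd0 x hx, hU0 x hx, trG_zero hδ (s := 0) (by simp [hδ.le]),
        trPsi_zero hδ (s := 0) (by simp [hδ.le])]
    have hUx : DifferentiableAt ℝ U x := (hUd x hx).differentiableAt (by norm_num)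
    have hΨx : ∀ i, pd i (fun x => trPsi δ (U x)) x = trK δ (U x) * pd i U x := fun i =>
      pd_comp hUx (trPsi_hasDerivAt δ _) i
    have hXx : ∀ i, pd i (X i) x =
        ζ (x 0) ^ 2 * (trG δ (U x) * pd i (fun y => ∑ j, a y i j * pd j U y) x +
          (∑ j, a x i j * pd j U x) * (trK δ (U x) ^ 2 * pd i U x)) +
        (trG δ (U x) * ∑ j, a x i j * pd j U x) *
          (if i = 0 then 2 * ζ (x 0) * deriv ζ (x 0) else 0) := by
      intro i
      have hA1 := (hAd x hx i).differentiableAt (by norm_num)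
      have hG1 : DifferentiableAt ℝ (fun y => trG δ (U y)) x :=
        ((trG_contDiff δ).differentiable (by norm_num) _).comp x hUx
      rw [hX]
      rw [pd_mul (f := fun y => ζ (y 0) ^ 2) (hζd.differentiable (by norm_num) x)
        (hG1.fun_mul hA1), pd_mul hG1 hA1, pd_cutoff hζ, pd_comp hUx (trG_hasDerivAt δ _)]
    obtain ⟨-, -, h3, h4⟩ := tr_abs (U x) hδ
    have hal := energy_algebra (z := ζ (x 0)) (z' := deriv ζ (x 0)) (0 : Fin (n + 1)) hlam hε
      (hco.elliptic x hx (fun i => pd i U x))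
      (hco.a_bdd x hx) (hsm x hx).1 (hsm x hx).2 h3 (trG_abs_le (U x) hδ) h4
      (trG_mul_le (U x) hδ)
    simp only [hΨx, hXx]
    rw [Finset.sum_add_distrib]
    simp only [mul_ite, mul_zero, Finset.sum_ite_eq', Finset.mem_univ, if_true]
    rw [← Finset.mul_sum, Finset.sum_add_distrib, ← Finset.mul_sum]
    have e1 : ∑ i, (∑ j, a x i j * pd j U x) * (trK δ (U x) ^ 2 * pd i U x) =
        trK δ (U x) ^ 2 * ∑ i, (∑ j, a x i j * pd j U x) * pd i U x := by
      rw [Finset.mul_sum]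
      exact Finset.sum_congr rfl fun i _ => by ring
    rw [e1, Lop]
    push_cast at hal
    linarith
  have hint := integral_le_of_sum hq iX i1 i3 i2 i4 hpt
  rw [hX0] at hint
  have hpoi : ∫ x, ζ (x 0) ^ 2 * trPsi δ (U x) ^ 2 ≤
      P * ∫ x, ζ (x 0) ^ 2 * ∑ i, pd i (fun x => trPsi δ (U x)) x ^ 2 := by
    have h1 := hP _ hΨd hψ0 (fun s => ζ s ^ 2) (hζc.pow 2) (fun s => sq_nonneg _)
    rw [← ofReal_integral_eq_lintegral_ofReal i2 (ae_of_all _ fun x => by positivity),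
      ← ofReal_integral_eq_lintegral_ofReal i1 (ae_of_all _ fun x => by positivity),
      ← ENNReal.ofReal_mul hP0.le] at h1
    refine (ENNReal.ofReal_le_ofReal_iff (mul_nonneg hP0.le ?_)).1 h1
    exact integral_nonneg fun x => by positivity
  set J := ∫ x, ζ (x 0) ^ 2 * trPsi δ (U x) ^ 2
  set G := ∫ x, ζ (x 0) ^ 2 * ∑ i, pd i (fun x => trPsi δ (U x)) x ^ 2
  have hJ0 : 0 ≤ J := integral_nonneg fun x => by positivity
  have hJ1 : lam / (2 * P) * J ≤ lam / 2 * G := by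
    calc lam / (2 * P) * J ≤ lam / (2 * P) * (P * G) :=
          mul_le_mul_of_nonneg_left hpoi (by positivity)
      _ = _ := by field_simp
  have hJ2 : (((n : ℝ) + 1) * (ε / lam) + ε) * J ≤ lam / (4 * P) * J := by
    refine mul_le_mul_of_nonneg_right (le_trans (le_of_eq ?_) hεP) hJ0
    ring
  have hJ3 : lam / (2 * P) * J = lam / (4 * P) * J + lam / (4 * P) * J := by
    field_simp; ring
  linarith

/-! ### The parabolic energy inequality and the conclusion -/

/-- The parabolic energy inequality for the extension `U` of a solution, in integrated form:
the truncated inequalities are integrated in time and the truncation is removed. -/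
lemma parabolic_energy {n : ℕ} {Ω₀ : Set (Fin n → ℝ)} (hΩ : IsOpen Ω₀)
    (hb : Bornology.IsBounded Ω₀) {lam Lam ε P R t₁ : ℝ} (hlam : 0 < lam) (hε : 0 ≤ ε) (hP0 : 0 < P)
    (hP : ∀ f : (Fin (n + 1) → ℝ) → ℝ, ContDiff ℝ 1 f → (∀ x, x ∉ strip Ω₀ → f x = 0) →
      ∀ η : ℝ → ℝ, Continuous η → (∀ s, 0 ≤ η s) →
      ∫⁻ x, ENNReal.ofReal (η (x 0) * f x ^ 2) ≤
        ENNReal.ofReal P * ∫⁻ x, ENNReal.ofReal (η (x 0) * ∑ i, pd i f x ^ 2))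
    (hεP : ((n + 1 : ℝ) / lam + 1) * ε ≤ lam / (4 * P))
    {a : (Fin (n + 1) → ℝ) → Fin (n + 1) → Fin (n + 1) → ℝ}
    {b : (Fin (n + 1) → ℝ) → Fin (n + 1) → ℝ} {c : (Fin (n + 1) → ℝ) → ℝ}
    (hco : GoodCoeffs Ω₀ lam Lam a b c) (hsm : Smallness Ω₀ b c ε)
    {u : ℝ → (Fin (n + 1) → ℝ) → ℝ} (hu : IsAncientSolution Ω₀ a b c u)
    {ζ : ℝ → ℝ} (hζ : ContDiff ℝ 1 ζ) (hζ0 : ∀ s, R ≤ |s| → ζ s = 0)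
    (hζ0' : ∀ s, R ≤ |s| → deriv ζ s = 0) (ht₁ : t₁ ≤ 0)
    {τ : ℝ → ℝ} (hτ : ContDiff ℝ 1 τ) (hτ0 : ∀ s, 0 ≤ τ s) (hτ1 : τ t₁ = 0) :
    0 ≤ ∫ t in t₁..0, ∫ x, (τ t * (-(lam / (4 * P)) * ζ (x 0) ^ 2
      + (n + 1) * (4 * Lam ^ 2 / lam) * deriv ζ (x 0) ^ 2) + |deriv τ t| * ζ (x 0) ^ 2)
        * extU Ω₀ u t x ^ 2 := by
  have hUc := continuous_extU hu
  have hτd : Continuous (deriv τ) := hτ.continuous_deriv (by norm_num)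
  have hζdc : Continuous (deriv ζ) := hζ.continuous_deriv (by norm_num)
  have hζc := hζ.continuous
  have hτc := hτ.continuous
  have hζ0c : Continuous fun x : Fin (n + 1) → ℝ => ζ (x 0) := by fun_prop
  have hζd0c : Continuous fun x : Fin (n + 1) → ℝ => deriv ζ (x 0) := by fun_prop
  set κ := lam / (4 * P) with hκ
  have hκ0 : 0 < κ := by positivity
  set C₁ : ℝ := (n + 1) * (4 * Lam ^ 2 / lam) with hC₁
  set N₂ : ℝ → ℝ := fun t => ∫ x, ζ (x 0) ^ 2 * extU Ω₀ u t x ^ 2 with hN₂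
  set N₁ : ℝ → ℝ := fun t => ∫ x, deriv ζ (x 0) ^ 2 * extU Ω₀ u t x ^ 2 with hN₁
  set A : ℝ → ℝ := fun t => ∫ x, ζ (x 0) ^ 2 * |extU Ω₀ u t x| with hA
  have c2 : Continuous (Function.uncurry fun (t : ℝ) (x : Fin (n + 1) → ℝ) =>
      ζ (x 0) ^ 2 * extU Ω₀ u t x ^ 2) :=
    ((hζ0c.comp continuous_snd).pow 2).mul (hUc.pow 2)
  have c1 : Continuous (Function.uncurry fun (t : ℝ) (x : Fin (n + 1) → ℝ) =>
      deriv ζ (x 0) ^ 2 * extU Ω₀ u t x ^ 2) :=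
    ((hζd0c.comp continuous_snd).pow 2).mul (hUc.pow 2)
  have c3 : Continuous (Function.uncurry fun (t : ℝ) (x : Fin (n + 1) → ℝ) =>
      ζ (x 0) ^ 2 * |extU Ω₀ u t x|) :=
    ((hζ0c.comp continuous_snd).pow 2).mul hUc.abs
  have z2 : ∀ t x, x ∉ cbox Ω₀ R → ζ (x 0) ^ 2 * extU Ω₀ u t x ^ 2 = 0 := fun t x hx => by
    rcases notMem_cbox hx with h | h
    · simp [hζ0 _ h.le]
    · simp [extU_of_notMem h]
  have z1 : ∀ t x, x ∉ cbox Ω₀ R → deriv ζ (x 0) ^ 2 * extU Ω₀ u t x ^ 2 = 0 := fun t x hx => by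
    rcases notMem_cbox hx with h | h
    · simp [hζ0' _ h.le]
    · simp [extU_of_notMem h]
  have z3 : ∀ t x, x ∉ cbox Ω₀ R → ζ (x 0) ^ 2 * |extU Ω₀ u t x| = 0 := fun t x hx => by
    rcases notMem_cbox hx with h | h
    · simp [hζ0 _ h.le]
    · simp [extU_of_notMem h]
  have hslice : ∀ t : ℝ, Continuous fun x : Fin (n + 1) → ℝ => (t, x) := fun t => by fun_prop
  have i2 : ∀ t, Integrable fun x => ζ (x 0) ^ 2 * extU Ω₀ u t x ^ 2 := fun t =>
    integrable_of_cbox hb (c2.comp (hslice t)) (z2 t)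
  have i1 : ∀ t, Integrable fun x => deriv ζ (x 0) ^ 2 * extU Ω₀ u t x ^ 2 := fun t =>
    integrable_of_cbox hb (c1.comp (hslice t)) (z1 t)
  have i3 : ∀ t, Integrable fun x => ζ (x 0) ^ 2 * |extU Ω₀ u t x| := fun t =>
    integrable_of_cbox hb (c3.comp (hslice t)) (z3 t)
  have hN₂c : Continuous N₂ := continuous_integral_of_cbox hb c2 z2
  have hN₁c : Continuous N₁ := continuous_integral_of_cbox hb c1 z1
  have hAc : Continuous A := continuous_integral_of_cbox hb c3 z3
  set G₀ : ℝ → ℝ := fun t => τ t * (-κ * N₂ t + C₁ * N₁ t) + |deriv τ t| * N₂ t with hG₀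
  have hG₀c : Continuous G₀ :=
    (hτc.mul ((hN₂c.const_mul _).add (hN₁c.const_mul _))).add (hτd.abs.mul hN₂c)
  have hrew : ∀ t, ∫ x, (τ t * (-κ * ζ (x 0) ^ 2 + C₁ * deriv ζ (x 0) ^ 2)
      + |deriv τ t| * ζ (x 0) ^ 2) * extU Ω₀ u t x ^ 2 = G₀ t := by
    intro t
    have e : ∀ x : Fin (n + 1) → ℝ, (τ t * (-κ * ζ (x 0) ^ 2 + C₁ * deriv ζ (x 0) ^ 2)
        + |deriv τ t| * ζ (x 0) ^ 2) * extU Ω₀ u t x ^ 2 =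
        (-τ t * κ + |deriv τ t|) * (ζ (x 0) ^ 2 * extU Ω₀ u t x ^ 2)
        + τ t * C₁ * (deriv ζ (x 0) ^ 2 * extU Ω₀ u t x ^ 2) := fun x => by ring
    simp_rw [e]
    rw [integral_add ((i2 t).const_mul _) ((i1 t).const_mul _), integral_const_mul,
      integral_const_mul]
    simp only [hG₀, hN₂, hN₁]
    ring
  simp_rw [hrew]
  -- the inequality with truncation at level `δ`
  have hδineq : ∀ δ > 0, 0 ≤ (∫ t in t₁..0, G₀ t) +
      δ * ∫ t in t₁..0, (4 * κ + 2 * ε) * (τ t * A t) := by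
    intro δ hδ
    set w : (Fin (n + 1) → ℝ) → ℝ := fun x => ζ (x 0) ^ 2 with hw
    have hwc : Continuous w := hζ0c.pow 2
    have hw0 : ∀ x, R < |x 0| → w x = 0 := fun x hx => by simp [hw, hζ0 _ hx.le]
    set I : ℝ → ℝ := fun t => ∫ x, w x * trPhi δ (extU Ω₀ u t x) with hI
    have cI : Continuous (Function.uncurry fun (t : ℝ) (x : Fin (n + 1) → ℝ) =>
        w x * trPhi δ (extU Ω₀ u t x)) :=
      (hwc.comp continuous_snd).mul ((trPhi_cont δ).comp hUc)
    have zI : ∀ t x, x ∉ cbox Ω₀ R → w x * trPhi δ (extU Ω₀ u t x) = 0 := fun t x hx => by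
      rcases notMem_cbox hx with h | h
      · simp [hw0 _ h]
      · simp [extU_of_notMem h, trPhi_zero hδ (s := 0) (by simp [hδ.le])]
    have hIc : Continuous I := continuous_integral_of_cbox hb cI zI
    have hI0 : ∀ t, 0 ≤ I t := fun t =>
      integral_nonneg fun x => mul_nonneg (sq_nonneg _) (trPhi_nonneg _ hδ)
    have hIN : ∀ t, I t ≤ N₂ t := fun t =>
      integral_mono (integrable_of_cbox hb (cI.comp (hslice t)) (zI t)) (i2 t) fun x =>
        mul_le_mul_of_nonneg_left (trPhi_le _ hδ) (sq_nonneg _)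
    set q : ℝ → ℝ := fun t => ∫ x, w x * (trG δ (extU Ω₀ u t x) * Lop a b c (u t) x) with hq
    have hqle : ∀ t < 0, q t ≤ -κ * N₂ t + C₁ * N₁ t + δ * ((4 * κ + 2 * ε) * A t) := by
      intro t ht
      have hqi := (energy_hasDerivWithinAt hΩ hb hlam hco hu hδ hwc hw0 ht).1
      have heq : (fun x => w x * (trG δ (extU Ω₀ u t x) * Lop a b c (u t) x)) =
          fun x => ζ (x 0) ^ 2 * (trG δ (extU Ω₀ u t x) * Lop a b c (extU Ω₀ u t) x) := by
        ext x
        by_cases hx : x ∈ strip Ω₀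
        · rw [Lop_congr (f := u t) (g := extU Ω₀ u t)]
          filter_upwards [(isOpen_strip hΩ).mem_nhds hx] with y hy
          exact (extU_of_mem ht.le hy).symm
        · simp [extU_of_notMem hx, trG_zero hδ (s := 0) (by simp [hδ.le])]
      simp only [hq]
      rw [heq] at hqi ⊢
      have hU2 : ContDiffOn ℝ 2 (extU Ω₀ u t) (strip Ω₀) :=
        (hu.space_reg t ht.le).congr fun x hx => extU_of_mem ht.le hx
      have hcr := continuous_extU_right hu t
      have h1 := spatial_energy hΩ hb hlam hε hP0 hP hεP hco hsm hcr
        (fun x hx => extU_of_notMem hx) hU2 hδ hζ hζ0 hζ0' hqi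
      have iψ : Integrable fun x => ζ (x 0) ^ 2 * trPsi δ (extU Ω₀ u t x) ^ 2 := by
        refine integrable_of_cbox hb (R := R) (Ω₀ := Ω₀) ((hζ0c.pow 2).mul
          (((trPsi_cont δ).comp hcr).pow 2)) fun x hx => ?_
        rcases notMem_cbox hx with h | h
        · simp [hζ0 _ h.le]
        · simp [extU_of_notMem h, trPsi_zero hδ (s := 0) (by simp [hδ.le])]
      have h2 : N₂ t - 4 * δ * A t ≤ ∫ x, ζ (x 0) ^ 2 * trPsi δ (extU Ω₀ u t x) ^ 2 := by
        simp only [hN₂, hA]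
        rw [← integral_const_mul, ← integral_sub (i2 t) ((i3 t).const_mul _)]
        refine integral_mono ((i2 t).sub ((i3 t).const_mul _)) iψ fun x => ?_
        have h3 := mul_le_mul_of_nonneg_left (trPsi_sq_ge (extU Ω₀ u t x) hδ)
          (sq_nonneg (ζ (x 0)))
        refine le_trans (le_of_eq ?_) h3
        ring
      have h3 := mul_le_mul_of_nonneg_left h2 hκ0.le
      have h4 : 2 * ε * δ * ∫ x, ζ (x 0) ^ 2 * |extU Ω₀ u t x| = 2 * ε * δ * A t := rfl
      have h5 : C₁ * ∫ x, deriv ζ (x 0) ^ 2 * extU Ω₀ u t x ^ 2 = C₁ * N₁ t := rfl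
      rw [← hκ, ← hC₁, h4, h5] at h1
      linarith
    set G : ℝ → ℝ := fun t => G₀ t + δ * ((4 * κ + 2 * ε) * (τ t * A t)) with hG
    have hAc' : Continuous fun t => (4 * κ + 2 * ε) * (τ t * A t) := (hτc.mul hAc).const_mul _
    have hGc : Continuous G := hG₀c.add (hAc'.const_mul _)
    have hGd : ∀ t, HasDerivAt (fun t => ∫ s in t₁..t, G s) (G t) t := fun t =>
      intervalIntegral.integral_hasDerivAt_right (hGc.intervalIntegrable _ _)
        (hGc.stronglyMeasurableAtFilter _ _) hGc.continuousAt
    have key := image_le_of_deriv_right_le_deriv_boundary (a := t₁) (b := 0)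
      (f := fun t => τ t * I t) (f' := fun t => deriv τ t * I t + τ t * q t)
      (hτc.mul hIc).continuousOn
      (fun t ht => ((hτ.differentiable (by norm_num) t).hasDerivAt.hasDerivWithinAt.mul
        (energy_hasDerivWithinAt hΩ hb hlam hco hu hδ hwc hw0 ht.2).2))
      (B := fun t => ∫ s in t₁..t, G s) (B' := G) (by simp [hτ1])
      (fun t _ => (hGd t).continuousAt.continuousWithinAt)
      (fun t _ => (hGd t).hasDerivWithinAt)
      (fun t ht => by
        have h1 := mul_le_mul_of_nonneg_left (hqle t ht.2) (hτ0 t)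
        have h2 : deriv τ t * I t ≤ |deriv τ t| * N₂ t :=
          mul_le_mul (le_abs_self _) (hIN t) (hI0 t) (abs_nonneg _)
        simp only [hG, hG₀]
        linarith)
      (right_mem_Icc.2 ht₁)
    have h0 : 0 ≤ τ 0 * I 0 := mul_nonneg (hτ0 0) (hI0 0)
    have hsplit : ∫ s in t₁..0, G s = (∫ t in t₁..0, G₀ t) +
        δ * ∫ t in t₁..0, (4 * κ + 2 * ε) * (τ t * A t) := by
      rw [← intervalIntegral.integral_const_mul]
      exact intervalIntegral.integral_add (hG₀c.intervalIntegrable _ _)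
        ((hAc'.const_mul _).intervalIntegrable _ _)
    rw [← hsplit]
    exact h0.trans key
  have hlim : Tendsto (fun δ : ℝ => (∫ t in t₁..0, G₀ t) +
      δ * ∫ t in t₁..0, (4 * κ + 2 * ε) * (τ t * A t)) (nhdsWithin 0 (Ioi 0))
      (nhds ((∫ t in t₁..0, G₀ t) + 0 * ∫ t in t₁..0, (4 * κ + 2 * ε) * (τ t * A t))) :=
    ((continuous_const.add (continuous_id.mul continuous_const)).tendsto 0).mono_left
      nhdsWithin_le_nhds
  rw [zero_mul, add_zero] at hlim
  exact ge_of_tendsto hlim (eventually_mem_nhdsWithin.mono fun δ hδ => hδineq δ hδ)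

lemma measurableSet_Qset {n : ℕ} {Ω₀ : Set (Fin n → ℝ)} (hΩ : IsOpen Ω₀) (r : ℝ) :
    MeasurableSet (Qset Ω₀ r) := by
  refine measurableSet_Ioc.prod ?_
  exact ((isOpen_Ioo.preimage (continuous_apply (0 : Fin (n + 1)))).inter
    (isOpen_strip hΩ)).measurableSet

/-- The passage from a weighted energy inequality on `(-R², 0] × [-R, R] × closure Ω₀` to the
reverse Poincaré inequality, using only the support properties and size of the weight. -/
lemma reverse_of_energy {n : ℕ} {Ω₀ : Set (Fin n → ℝ)} (hΩ : IsOpen Ω₀)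
    (hb : Bornology.IsBounded Ω₀) {a : (Fin (n + 1) → ℝ) → Fin (n + 1) → Fin (n + 1) → ℝ}
    {b : (Fin (n + 1) → ℝ) → Fin (n + 1) → ℝ} {c : (Fin (n + 1) → ℝ) → ℝ}
    {u : ℝ → (Fin (n + 1) → ℝ) → ℝ} (hu : IsAncientSolution Ω₀ a b c u)
    {r R κ B : ℝ} (hr : 0 < r) (hrR : r < R) {H : ℝ × (Fin (n + 1) → ℝ) → ℝ} (hH : Continuous H)
    (hH0 : ∀ t, ∀ x : Fin (n + 1) → ℝ, R ≤ |x 0| → H (t, x) = 0)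
    (hHr : ∀ t, ∀ x : Fin (n + 1) → ℝ, -r ^ 2 < t → |x 0| < r → H (t, x) = -κ)
    (hHB : ∀ p, H p ≤ B)
    (h : 0 ≤ ∫ t in (-R ^ 2)..0, ∫ x, H (t, x) * extU Ω₀ u t x ^ 2) :
    κ * (∫ p in Qset Ω₀ r, u p.1 p.2 ^ 2) ≤
      B * ∫ p in Qset Ω₀ R \ Qset Ω₀ r, u p.1 p.2 ^ 2 := by
  have hUc := continuous_extU hu
  set F : ℝ × (Fin (n + 1) → ℝ) → ℝ := fun p => H p * extU Ω₀ u p.1 p.2 ^ 2 with hF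
  have hFc : Continuous F := hH.mul (hUc.pow 2)
  have hcomp : IsCompact (Icc (-R ^ 2) 0 ×ˢ cbox Ω₀ R) := isCompact_Icc.prod (isCompact_cbox hb R)
  have hsub : Ioc (-R ^ 2) 0 ×ˢ cbox Ω₀ R ⊆ Icc (-R ^ 2) 0 ×ˢ cbox Ω₀ R :=
    prod_mono Ioc_subset_Icc_self Subset.rfl
  have hQS : Qset Ω₀ R ⊆ Ioc (-R ^ 2) 0 ×ˢ cbox Ω₀ R := fun p hp =>
    ⟨hp.1, (abs_lt.2 hp.2.1).le, subset_closure hp.2.2⟩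
  have hQQ : Qset Ω₀ r ⊆ Qset Ω₀ R := fun p hp =>
    ⟨⟨lt_of_le_of_lt (by nlinarith) hp.1.1, hp.1.2⟩,
      ⟨by linarith [hp.2.1.1], by linarith [hp.2.1.2]⟩, hp.2.2⟩
  have hmR := measurableSet_Qset hΩ R
  have hmr := measurableSet_Qset hΩ r
  have hFi : IntegrableOn F (Icc (-R ^ 2) 0 ×ˢ cbox Ω₀ R) :=
    hFc.continuousOn.integrableOn_compact hcomp
  have hUi : IntegrableOn (fun p : ℝ × (Fin (n + 1) → ℝ) => extU Ω₀ u p.1 p.2 ^ 2)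
      (Icc (-R ^ 2) 0 ×ˢ cbox Ω₀ R) :=
    (hUc.pow 2).continuousOn.integrableOn_compact hcomp
  have hR2 : -R ^ 2 ≤ 0 := by nlinarith
  have e1 : ∫ t in (-R ^ 2)..0, ∫ x, H (t, x) * extU Ω₀ u t x ^ 2 =
      ∫ p in Ioc (-R ^ 2) 0 ×ˢ cbox Ω₀ R, F p := by
    have := setIntegral_prod (μ := volume) (ν := volume) F (hFi.mono_set hsub)
    rw [← Measure.volume_eq_prod] at this
    rw [this, intervalIntegral.integral_of_le hR2]
    refine integral_congr_ae (ae_of_all _ fun t => ?_)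
    refine (setIntegral_eq_integral_of_forall_compl_eq_zero fun x hx => ?_).symm
    rcases notMem_cbox hx with h' | h'
    · simp [hH0 t x h'.le]
    · simp [extU_of_notMem h']
  have e2 : ∫ p in Ioc (-R ^ 2) 0 ×ˢ cbox Ω₀ R, F p = ∫ p in Qset Ω₀ R, F p := by
    refine setIntegral_eq_of_subset_of_forall_sdiff_eq_zero
      (measurableSet_Ioc.prod (isCompact_cbox hb R).measurableSet) hQS fun p hp => ?_
    by_cases hx : p.2 ∈ strip Ω₀
    · have : R ≤ |p.2 0| := by
        by_contra! hlt
        exact hp.2 ⟨hp.1.1, abs_lt.1 hlt, hx⟩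
      simp only [hF]
      rw [show p = (p.1, p.2) from rfl, hH0 p.1 p.2 this, zero_mul]
    · simp [hF, extU_of_notMem hx]
  have hFR : IntegrableOn F (Qset Ω₀ R) := hFi.mono_set (hQS.trans hsub)
  have hUR := hUi.mono_set (hQS.trans hsub)
  have e3 : ∫ p in Qset Ω₀ R, F p =
      (∫ p in Qset Ω₀ r, F p) + ∫ p in Qset Ω₀ R \ Qset Ω₀ r, F p := by
    rw [← setIntegral_union disjoint_sdiff_right (hmR.diff hmr) (hFR.mono_set hQQ)
      (hFR.mono_set sdiff_subset), union_sdiff_cancel hQQ]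
  have hUu : ∀ p ∈ Qset Ω₀ R, extU Ω₀ u p.1 p.2 = u p.1 p.2 := fun p hp =>
    extU_of_mem hp.1.2 hp.2.2
  have e4 : ∫ p in Qset Ω₀ r, F p = -κ * ∫ p in Qset Ω₀ r, u p.1 p.2 ^ 2 := by
    rw [← integral_const_mul]
    refine setIntegral_congr_fun hmr fun p hp => ?_
    simp only [hF]
    rw [hUu p (hQQ hp), show p = (p.1, p.2) from rfl, hHr p.1 p.2 hp.1.1 (abs_lt.2 hp.2.1)]
  have e5 : ∫ p in Qset Ω₀ R \ Qset Ω₀ r, F p ≤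
      B * ∫ p in Qset Ω₀ R \ Qset Ω₀ r, u p.1 p.2 ^ 2 := by
    have e6 : ∫ p in Qset Ω₀ R \ Qset Ω₀ r, u p.1 p.2 ^ 2 =
        ∫ p in Qset Ω₀ R \ Qset Ω₀ r, extU Ω₀ u p.1 p.2 ^ 2 :=
      setIntegral_congr_fun (hmR.diff hmr) fun p hp => by simp only [hUu p hp.1]
    rw [e6, ← integral_const_mul]
    exact setIntegral_mono_on (hFR.mono_set sdiff_subset)
      ((hUR.mono_set sdiff_subset).const_mul _) (hmR.diff hmr)
      fun p _ => mul_le_mul_of_nonneg_right (hHB p) (sq_nonneg _)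
  rw [e1, e2, e3, e4] at h
  linarith

/-- Reverse Poincaré inequality for the solution itself (Lemma 2.1, second inequality). -/
theorem reverse_poincare
    (n : ℕ) (hn : 1 ≤ n) (lam V₀ : ℝ) (hlam : 0 < lam) (hV₀ : 0 < V₀) :
    ∃ ε₀ > (0 : ℝ), ∀ Lam : ℝ, lam < Lam →
    ∃ C > (0 : ℝ), ∀ Ω₀ : Set (Fin n → ℝ), IsOpen Ω₀ → Ω₀.Nonempty →
      Bornology.IsBounded Ω₀ → volume Ω₀ = ENNReal.ofReal V₀ →
    ∀ a b c, GoodCoeffs Ω₀ lam Lam a b c → Smallness Ω₀ b c ε₀ →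
    ∀ u : ℝ → (Fin (n + 1) → ℝ) → ℝ, IsAncientSolution Ω₀ a b c u →
    ∀ r R : ℝ, 0 < r → r < R →
      (∫ p in Qset Ω₀ r, u p.1 p.2 ^ 2) ≤
        C / (R - r) ^ 2 * ∫ p in Qset Ω₀ R \ Qset Ω₀ r, u p.1 p.2 ^ 2 := by
  obtain ⟨P, hP0, hP⟩ := poincare_lintegral hn hV₀
  obtain ⟨Mt, hMt, hcut⟩ := exists_time_cutoff
  obtain ⟨Mx, hMx, hcutx⟩ := exists_space_cutoff
  have hs : 0 < (n + 1 : ℝ) / lam + 1 := by positivity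
  refine ⟨lam / (4 * P) / ((n + 1 : ℝ) / lam + 1), by positivity, fun Lam hLam => ?_⟩
  have hLam0 : 0 < Lam := hlam.trans hLam
  refine ⟨((n + 1) * (4 * Lam ^ 2 / lam) * Mx ^ 2 + Mt) / (lam / (4 * P)), by positivity, ?_⟩
  intro Ω₀ hΩ _ hb hV a b c hco hsm u hu r R hr hrR
  have hsq : -R ^ 2 < -r ^ 2 := by nlinarith
  obtain ⟨τ, hτ, hτ0, hτle, hτα, hτβ, hτd, hτd0, -⟩ := hcut (-R ^ 2) (-r ^ 2) hsq
  obtain ⟨ζ, hζ, hζ0, hζle, hζR, hζr, hζd, hζdr, hζdR⟩ := hcutx r R hr hrR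
  have hen := parabolic_energy hΩ hb hlam (by positivity) hP0
    (hP Ω₀ hΩ.measurableSet hV) (le_of_eq (mul_div_cancel₀ _ hs.ne')) hco hsm hu hζ hζR hζdR
    (by nlinarith : -R ^ 2 ≤ 0) hτ hτ0 (hτα _ le_rfl)
  have hτc := hτ.continuous
  have hζc := hζ.continuous
  have hτdc : Continuous (deriv τ) := hτ.continuous_deriv (by norm_num)
  have hζdc : Continuous (deriv ζ) := hζ.continuous_deriv (by norm_num)
  have hRr : 0 < R - r := by linarith
  have main := reverse_of_energy (κ := lam / (4 * P))
    (B := ((n + 1) * (4 * Lam ^ 2 / lam) * Mx ^ 2 + Mt) / (R - r) ^ 2) hΩ hb hu hr hrR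
    (H := fun p => τ p.1 * (-(lam / (4 * P)) * ζ (p.2 0) ^ 2
      + (n + 1) * (4 * Lam ^ 2 / lam) * deriv ζ (p.2 0) ^ 2) + |deriv τ p.1| * ζ (p.2 0) ^ 2)
    (by fun_prop)
    (fun t x hx => by simp [hζR _ hx, hζdR _ hx])
    (fun t x ht hx => by simp [hζr _ hx.le, hζdr _ hx, hτβ _ ht.le, hτd0 _ ht])
    (fun p => by
      have h1 : |deriv τ p.1| * ζ (p.2 0) ^ 2 ≤ Mt / (R - r) ^ 2 := by
        have h2 : ζ (p.2 0) ^ 2 ≤ 1 := pow_le_one₀ (hζ0 _) (hζle _)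
        have h3 : Mt / (-r ^ 2 - -R ^ 2) ≤ Mt / (R - r) ^ 2 :=
          div_le_div_of_nonneg_left hMt.le (by positivity) (by nlinarith)
        calc |deriv τ p.1| * ζ (p.2 0) ^ 2 ≤ |deriv τ p.1| * 1 :=
              mul_le_mul_of_nonneg_left h2 (abs_nonneg _)
          _ ≤ Mt / (R - r) ^ 2 := by rw [mul_one]; exact (hτd _).trans h3
      have h4 : deriv ζ (p.2 0) ^ 2 ≤ Mx ^ 2 / (R - r) ^ 2 := by
        rw [← sq_abs, ← div_pow]
        exact pow_le_pow_left₀ (abs_nonneg _) (hζd _) 2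
      have hC : 0 ≤ (n + 1) * (4 * Lam ^ 2 / lam) := by positivity
      have h5 : -(lam / (4 * P)) * ζ (p.2 0) ^ 2
          + (n + 1) * (4 * Lam ^ 2 / lam) * deriv ζ (p.2 0) ^ 2 ≤
          (n + 1) * (4 * Lam ^ 2 / lam) * (Mx ^ 2 / (R - r) ^ 2) := by
        have h6 := mul_le_mul_of_nonneg_left h4 hC
        have h7 : 0 ≤ lam / (4 * P) * ζ (p.2 0) ^ 2 := by positivity
        linarith
      have h8 : τ p.1 * (-(lam / (4 * P)) * ζ (p.2 0) ^ 2
          + (n + 1) * (4 * Lam ^ 2 / lam) * deriv ζ (p.2 0) ^ 2) ≤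
          (n + 1) * (4 * Lam ^ 2 / lam) * (Mx ^ 2 / (R - r) ^ 2) := by
        refine (mul_le_mul_of_nonneg_left h5 (hτ0 _)).trans ?_
        exact mul_le_of_le_one_left (by positivity) (hτle _)
      calc _ ≤ (n + 1) * (4 * Lam ^ 2 / lam) * (Mx ^ 2 / (R - r) ^ 2) + Mt / (R - r) ^ 2 :=
            add_le_add h8 h1
        _ = _ := by ring)
    hen
  have hκ : 0 < lam / (4 * P) := by positivity
  rw [← le_div_iff₀' hκ] at main
  refine main.trans (le_of_eq ?_)
  ring
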